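/- arXiv:1506.06545 — 2 statements merged into one kernel-verified Lean document; each statement's English description precedes it below -/
import Mathlib

section
/- Fix τ ∈ ℍ, A ∈ ℂ and p ∈ ℂ with 2p ∉ Λ_τ, let n₀ = n₁ = n₂ = n₃ = 0, let B = A² − ζ(2p|τ)A − (3/4)℘(2p|τ), and let I(z;τ) = (3/4)(℘(z+p|τ) + ℘(z−p|τ)) + A(ζ(z+p|τ) − ζ(z−p|τ)) + B. Then the function Φ(z) = ζ(z+p|τ) − ζ(z−p|τ) − ζ(2p|τ) − 2A is an even elliptic function with periods 1 and τ, and it satisfies the second symmetric power equation Φ‴(z) − 4I(z;τ)Φ′(z) − 2I′(z;τ)Φ(z) = 0 away from the singular set. -/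
open Complex Filter Topology Asymptotics

noncomputable section

/-- membership in the lattice `Λ_τ = ℤ + τℤ`. -/
def InLattice (τ z : ℂ) : Prop := ∃ m n : ℤ, z = (m : ℂ) + (n : ℂ) * τ

/-- the half-period generators `ω₀ = 0, ω₁ = 1, ω₂ = τ, ω₃ = 1 + τ`. -/
def halfp (τ : ℂ) : Fin 4 → ℂ := ![0, 1, τ, 1 + τ]

/-- the Weierstrass elliptic function `℘(z|τ)`. -/
def wp (τ z : ℂ) : ℂ :=
  z⁻¹ ^ 2 + ∑' w : {w : ℤ × ℤ // w ≠ 0},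
    ((z - ((w.1.1 : ℂ) + (w.1.2 : ℂ) * τ))⁻¹ ^ 2 - ((w.1.1 : ℂ) + (w.1.2 : ℂ) * τ)⁻¹ ^ 2)

/-- `℘′(z|τ)`, the `z`-derivative of `℘`. -/
def wpd (τ z : ℂ) : ℂ := deriv (wp τ) z

/-- `℘″(z|τ)`. -/
def wpdd (τ z : ℂ) : ℂ := deriv (wpd τ) z

def e1 (τ : ℂ) : ℂ := wp τ (1 / 2)
def e2 (τ : ℂ) : ℂ := wp τ (τ / 2)
def e3 (τ : ℂ) : ℂ := wp τ ((1 + τ) / 2)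

def g2 (τ : ℂ) : ℂ := -4 * (e1 τ * e2 τ + e1 τ * e3 τ + e2 τ * e3 τ)

/-- `zeta` is the Weierstrass zeta function: for each `τ ∈ ℍ`, `zeta τ` is odd, satisfies
`∂ζ/∂z = -℘` off the lattice, and `ζ(z|τ) - 1/z → 0` as `z → 0`. -/
def IsWeierstrassZeta (zeta : ℂ → ℂ → ℂ) : Prop :=
  ∀ τ : ℂ, 0 < τ.im →
    (∀ z : ℂ, zeta τ (-z) = - zeta τ z) ∧
    (∀ z : ℂ, ¬ InLattice τ z → HasDerivAt (zeta τ) (- wp τ z) z) ∧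
    Tendsto (fun z => zeta τ z - z⁻¹) (𝓝[≠] (0 : ℂ)) (𝓝 0)

/-- `eta1 τ = ζ(z+1|τ) - ζ(z|τ)` is the first quasi-period. -/
def IsEta1 (zeta : ℂ → ℂ → ℂ) (eta1 : ℂ → ℂ) : Prop :=
  ∀ τ : ℂ, 0 < τ.im → ∀ z : ℂ, ¬ InLattice τ z →
    eta1 τ = zeta τ (z + 1) - zeta τ z

/-- `eta2 τ = ζ(z+τ|τ) - ζ(z|τ)` is the second quasi-period. -/
def IsEta2 (zeta : ℂ → ℂ → ℂ) (eta2 : ℂ → ℂ) : Prop :=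
  ∀ τ : ℂ, 0 < τ.im → ∀ z : ℂ, ¬ InLattice τ z →
    eta2 τ = zeta τ (z + τ) - zeta τ z

/-- `sigma` is the Weierstrass sigma function: entire, odd, with
`∂/∂z log σ = ζ` off the lattice and `σ(z|τ)/z → 1` as `z → 0`. -/
def IsWeierstrassSigma (zeta sigma : ℂ → ℂ → ℂ) : Prop :=
  ∀ τ : ℂ, 0 < τ.im →
    (∀ z : ℂ, sigma τ (-z) = - sigma τ z) ∧
    Differentiable ℂ (sigma τ) ∧
    (∀ z : ℂ, ¬ InLattice τ z → HasDerivAt (sigma τ) (zeta τ z * sigma τ z) z) ∧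
    Tendsto (fun z => sigma τ z / z) (𝓝[≠] (0 : ℂ)) (𝓝 1)

/-- the Hamiltonian system (142) for `(p(τ), A(τ))` on `V`. -/
def HamSystem (n : Fin 4 → ℂ) (zeta : ℂ → ℂ → ℂ) (eta1 : ℂ → ℂ)
    (V : Set ℂ) (p A : ℂ → ℂ) : Prop :=
  ∀ τ ∈ V,
    HasDerivAt p ((-Complex.I / (4 * (Real.pi : ℂ))) *
      (2 * A τ - zeta τ (2 * p τ) + 2 * p τ * eta1 τ)) τ ∧
    HasDerivAt A ((Complex.I / (4 * (Real.pi : ℂ))) *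
      ((2 * wp τ (2 * p τ) + 2 * eta1 τ) * A τ - (3 / 2) * wpd τ (2 * p τ)
        - ∑ k : Fin 4, n k * (n k + 1) * wpd τ (p τ + halfp τ k / 2))) τ

/-- the generalized Lamé potential `I(z;τ)`. -/
def Ipot (n : Fin 4 → ℂ) (zeta : ℂ → ℂ → ℂ) (A B p τ z : ℂ) : ℂ :=
  (∑ k : Fin 4, n k * (n k + 1) * wp τ (z + halfp τ k / 2))
    + (3 / 4) * (wp τ (z + p) + wp τ (z - p))
    + A * (zeta τ (z + p) - zeta τ (z - p)) + B

end

/-- A locally meromorphic function all of whose singularities are removable, and which is periodic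
with respect to a lattice, has the same limit at every point. -/
lemma PeriodPair.exists_forall_tendsto_of_periodic (L : PeriodPair) {f : ℂ → ℂ}
    (hd : ∀ z, ∀ᶠ w in 𝓝[≠] z, DifferentiableAt ℂ f w)
    (hl : ∀ z, ∃ c, Tendsto f (𝓝[≠] z) (𝓝 c))
    (hper : ∀ l ∈ L.lattice, ∀ z, ∀ᶠ w in 𝓝[≠] z, f (w + l) = f w) :
    ∃ c, ∀ z, Tendsto f (𝓝[≠] z) (𝓝 c) := by
  choose g hg using hl
  have hgf : ∀ z, ContinuousAt f z → g z = f z := fun z hz ↦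
    tendsto_nhds_unique (hg z) (hz.tendsto.mono_left nhdsWithin_le_nhds)
  have hev : ∀ z, ∀ᶠ w in 𝓝[≠] z, g w = f w := fun z ↦
    (hd z).mono fun w hw ↦ hgf w hw.continuousAt
  have hgd : Differentiable ℂ g := by
    intro z
    refine (Complex.analyticAt_of_differentiable_on_punctured_nhds_of_continuousAt
      ?_ ?_).differentiableAt
    · filter_upwards [hd z, eventually_eventually_nhdsWithin.2 (hev z), self_mem_nhdsWithin]
        with w hw hw' hne
      rw [isOpen_compl_singleton.nhdsWithin_eq hne] at hw'
      exact hw.congr_of_eventuallyEq hw'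
    · rw [continuousAt_iff_punctured_nhds]
      exact (hg z).congr' ((hev z).mono fun w hw ↦ hw.symm)
  have hgper : ∀ z l, l ∈ L.lattice → g (z + l) = g z := by
    intro z l hl
    have h1 : Tendsto (fun w ↦ w + l) (𝓝[≠] z) (𝓝[≠] (z + l)) := by
      refine tendsto_nhdsWithin_iff.2 ⟨?_, ?_⟩
      · exact ((continuous_add_const l).tendsto z).mono_left nhdsWithin_le_nhds
      · filter_upwards [self_mem_nhdsWithin] with w hw
        simpa using hw
    exact tendsto_nhds_unique (((hg (z + l)).comp h1).congr' (hper l hl z)) (hg z)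
  obtain ⟨c, hc⟩ := hgd.exists_const_forall_eq_of_bounded
    (IsZLattice.isCompact_range_of_periodic L.lattice g hgd.continuous hgper).isBounded
  exact ⟨c, fun z ↦ hc z ▸ hg z⟩

lemma PeriodPair.eventually_nhdsNE_notMem_lattice (L : PeriodPair) (z : ℂ) :
    ∀ᶠ w in 𝓝[≠] z, w ∉ L.lattice := by
  filter_upwards [self_mem_nhdsWithin, mem_nhdsWithin_of_mem_nhds
    (L.compl_lattice_sdiff_singleton_mem_nhds z)] with w hw hw' hmem
  exact hw' ⟨hmem, hw⟩

lemma PeriodPair.hasDerivAt_weierstrassP (L : PeriodPair) {z : ℂ} (hz : z ∉ L.lattice) :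
    HasDerivAt L.weierstrassP (L.derivWeierstrassP z) z := by
  rw [← L.deriv_weierstrassP]
  exact (L.analyticOnNhd_weierstrassP z hz).differentiableAt.hasDerivAt

lemma PeriodPair.weierstrassP_eq_inv_sq_add (L : PeriodPair) (z : ℂ) :
    L.weierstrassP z = z⁻¹ ^ 2 + L.weierstrassPExcept 0 z := by
  have := L.weierstrassPExcept_add 0 z
  simp only [ZeroMemClass.coe_zero, sub_zero] at this
  rw [← this]
  simp [add_comm]

/-- The derivative of `℘` does not vanish identically off the lattice. -/
lemma PeriodPair.not_eqOn_derivWeierstrassP_zero (L : PeriodPair) :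
    ¬ ∀ z ∈ (L.lattice : Set ℂ)ᶜ, L.derivWeierstrassP z = 0 := by
  intro h
  have h1 : Tendsto (fun z : ℂ ↦ z ^ 3 * L.derivWeierstrassPExcept 0 z - 2) (𝓝[≠] 0)
      (𝓝 (0 ^ 3 * L.derivWeierstrassPExcept 0 0 - 2)) := by
    have : ContinuousAt (fun z : ℂ ↦ z ^ 3 * L.derivWeierstrassPExcept 0 z - 2) 0 := by
      have := (L.analyticAt_derivWeierstrassPExcept 0).continuousAt
      fun_prop
    exact this.tendsto.mono_left nhdsWithin_le_nhds
  have h2 : (fun z : ℂ ↦ z ^ 3 * L.derivWeierstrassPExcept 0 z - 2) =ᶠ[𝓝[≠] 0] fun _ ↦ 0 := by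
    filter_upwards [self_mem_nhdsWithin, L.eventually_nhdsNE_notMem_lattice 0] with z hz hz'
    have h3 := L.derivWeierstrassPExcept_sub 0 z
    rw [h z hz'] at h3
    simp only [ZeroMemClass.coe_zero, sub_zero] at h3
    have hz0 : z ≠ 0 := hz
    rw [sub_eq_zero.1 h3]
    field_simp
    simp
  have := tendsto_nhds_unique (h1.congr' h2) tendsto_const_nhds
  norm_num at this

/-- The second derivative of `℘` is `6 ℘² - g₂ / 2`. -/
lemma PeriodPair.hasDerivAt_derivWeierstrassP (L : PeriodPair) {z : ℂ} (hz : z ∉ L.lattice) :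
    HasDerivAt L.derivWeierstrassP (6 * L.weierstrassP z ^ 2 - L.g₂ / 2) z := by
  set Q : ℂ → ℂ := fun z ↦ 2 * deriv L.derivWeierstrassP z - 12 * L.weierstrassP z ^ 2 + L.g₂
  have hopen : IsOpen (L.lattice : Set ℂ)ᶜ := L.isClosed_lattice.isOpen_compl
  have hP := L.analyticOnNhd_weierstrassP
  have hP' := L.analyticOnNhd_derivWeierstrassP
  have hQ : AnalyticOnNhd ℂ Q (L.lattice : Set ℂ)ᶜ := by
    intro x hx
    have h1 := hP x hx
    have h2 := (hP'.deriv) x hx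
    fun_prop
  have hconn : IsPreconnected (L.lattice : Set ℂ)ᶜ := by
    have hc : (L.lattice : Set ℂ).Countable := by
      have : Countable L.lattice := L.latticeEquivProd.toEquiv.countable_iff.2 inferInstance
      exact Set.to_countable _
    exact (hc.isConnected_compl_of_one_lt_rank (by simp)).isPreconnected
  have hmul : ∀ x ∈ (L.lattice : Set ℂ)ᶜ, L.derivWeierstrassP x * Q x = 0 := by
    intro x hx
    have e : (fun z ↦ L.derivWeierstrassP z ^ 2) =ᶠ[𝓝 x]
        fun z ↦ 4 * L.weierstrassP z ^ 3 - L.g₂ * L.weierstrassP z - L.g₃ :=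
      (hopen.eventually_mem hx).mono fun y hy ↦ L.derivWeierstrassP_sq y hy
    have d1 := ((hP' x hx).differentiableAt.hasDerivAt).pow 2
    have d0 := L.hasDerivAt_weierstrassP hx
    have d2 := (((d0.pow 3).const_mul 4).sub (d0.const_mul L.g₂)).sub_const L.g₃
    have := d1.unique (d2.congr_of_eventuallyEq e)
    simp only [Q]
    norm_num at this
    linear_combination this
  have hQ0 : Q z = 0 := (hP'.eq_zero_or_eq_zero_of_mul_eq_zero hQ hmul hconn).resolve_left
    L.not_eqOn_derivWeierstrassP_zero z hz
  have hval : 6 * L.weierstrassP z ^ 2 - L.g₂ / 2 = deriv L.derivWeierstrassP z := by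
    simp only [Q] at hQ0
    linear_combination (-1 / 2 : ℂ) * hQ0
  rw [hval]
  exact (hP' z hz).differentiableAt.hasDerivAt


/-- `Z` is a Weierstrass zeta function of the lattice of `L`. -/
structure PeriodPair.IsZeta (L : PeriodPair) (Z : ℂ → ℂ) : Prop where
  neg : ∀ z, Z (-z) = -Z z
  hasDerivAt : ∀ z, z ∉ L.lattice → HasDerivAt Z (-L.weierstrassP z) z
  tendsto : Tendsto (fun z ↦ Z z - z⁻¹) (𝓝[≠] (0 : ℂ)) (𝓝 0)
  quasiPeriodic : ∀ l ∈ L.lattice, ∃ η, ∀ z, z ∉ L.lattice → Z (z + l) = Z z + η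

namespace PeriodPair.IsZeta

variable {L : PeriodPair} {Z : ℂ → ℂ}

/-- The zeta function has no linear term at the origin. -/
lemma tendsto_div (h : L.IsZeta Z) :
    Tendsto (fun z ↦ (Z z - z⁻¹) / z) (𝓝[≠] (0 : ℂ)) (𝓝 0) := by
  set a : ℂ → ℂ := Function.update (fun z ↦ Z z - z⁻¹) 0 0 with ha
  have hne : ∀ z, z ≠ 0 → a z = Z z - z⁻¹ := fun z hz ↦ by simp [ha, hz]
  have hder : ∀ᶠ z in 𝓝[≠] (0 : ℂ), HasDerivAt a (-L.weierstrassPExcept 0 z) z := by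
    filter_upwards [self_mem_nhdsWithin, L.eventually_nhdsNE_notMem_lattice 0] with z hz hz'
    have hz0 : z ≠ 0 := hz
    have h1 := (h.hasDerivAt z hz').sub (hasDerivAt_inv hz0)
    have h2 : -L.weierstrassP z - -(z ^ 2)⁻¹ = -L.weierstrassPExcept 0 z := by
      rw [L.weierstrassP_eq_inv_sq_add]
      ring
    rw [h2] at h1
    exact h1.congr_of_eventuallyEq
      ((isOpen_compl_singleton.eventually_mem hz0).mono fun y hy ↦ hne y hy)
  have hcont : ContinuousAt a 0 := by
    rw [continuousAt_iff_punctured_nhds]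
    have : a 0 = 0 := by simp [ha]
    rw [this]
    exact h.tendsto.congr' (eventually_nhdsWithin_of_forall fun z hz ↦ (hne z hz).symm)
  have han : AnalyticAt ℂ a 0 :=
    Complex.analyticAt_of_differentiable_on_punctured_nhds_of_continuousAt
      (hder.mono fun z hz ↦ hz.differentiableAt) hcont
  have hd0 : deriv a 0 = 0 := by
    have t1 : Tendsto (deriv a) (𝓝[≠] 0) (𝓝 (deriv a 0)) :=
      han.deriv.continuousAt.tendsto.mono_left nhdsWithin_le_nhds
    have t2 : Tendsto (fun z ↦ -L.weierstrassPExcept 0 z) (𝓝[≠] 0)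
        (𝓝 (-L.weierstrassPExcept 0 0)) :=
      (L.analyticAt_weierstrassPExcept 0).continuousAt.neg.tendsto.mono_left nhdsWithin_le_nhds
    simpa using tendsto_nhds_unique (t1.congr' (hder.mono fun z hz ↦ hz.deriv)) t2
  have hs := hasDerivAt_iff_tendsto_slope.1 (hd0 ▸ han.differentiableAt.hasDerivAt)
  refine hs.congr' (eventually_nhdsWithin_of_forall fun z hz ↦ ?_)
  have : a 0 = 0 := by simp [ha]
  rw [slope_def_field, this, hne z hz, sub_zero, sub_zero]

/-- The function of `v` that vanishes identically by the addition theorem for the zeta function. -/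
noncomputable def additionDefect (L : PeriodPair) (Z : ℂ → ℂ) (w v : ℂ) : ℂ :=
  (Z (v + w) - Z v - Z w) ^ 2 - L.weierstrassP (v + w) - L.weierstrassP v - L.weierstrassP w

lemma additionDefect_reflect (h : L.IsZeta Z) (w v : ℂ) :
    additionDefect L Z w (-w - v) = additionDefect L Z w v := by
  have e1 : -w - v + w = -v := by ring
  have e2 : -w - v = -(v + w) := by ring
  rw [additionDefect, additionDefect, e1, e2, h.neg, h.neg, L.weierstrassP_neg, L.weierstrassP_neg]
  ring

lemma additionDefect_add (h : L.IsZeta Z) {w v l : ℂ} (hl : l ∈ L.lattice) (hv : v ∉ L.lattice)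
    (hvw : v + w ∉ L.lattice) : additionDefect L Z w (v + l) = additionDefect L Z w v := by
  obtain ⟨η, hη⟩ := h.quasiPeriodic l hl
  rw [additionDefect, additionDefect, add_right_comm, hη v hv, hη (v + w) hvw,
    L.weierstrassP_add_coe v ⟨l, hl⟩, L.weierstrassP_add_coe (v + w) ⟨l, hl⟩]
  ring

lemma tendsto_additionDefect_zero (h : L.IsZeta Z) {w : ℂ} (hw : w ∉ L.lattice) :
    Tendsto (additionDefect L Z w) (𝓝[≠] 0) (𝓝 0) := by
  have hZ : Tendsto (fun v ↦ (Z (v + w) - Z w) / v) (𝓝[≠] 0) (𝓝 (-L.weierstrassP w)) := by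
    have := hasDerivAt_iff_tendsto_slope_zero.1 (h.hasDerivAt w hw)
    refine this.congr fun v ↦ ?_
    rw [add_comm w v, smul_eq_mul, inv_mul_eq_div]
  have hid : Tendsto (fun v : ℂ ↦ v) (𝓝[≠] 0) (𝓝 0) := tendsto_id.mono_left nhdsWithin_le_nhds
  have hPw : Tendsto (fun v ↦ L.weierstrassP (v + w)) (𝓝[≠] 0) (𝓝 (L.weierstrassP w)) := by
    have hc := (L.analyticOnNhd_weierstrassP w hw).continuousAt.tendsto
    refine hc.comp ?_
    simpa using hid.add_const w
  have hE : Tendsto (L.weierstrassPExcept 0) (𝓝[≠] 0) (𝓝 0) := by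
    have := (L.analyticAt_weierstrassPExcept 0).continuousAt.tendsto
    rw [L.weierstrassPExcept_zero] at this
    exact this.mono_left nhdsWithin_le_nhds
  have hs := hZ.sub h.tendsto_div
  have hlim := ((((hs.const_mul (-2)).add ((hs.mul hid).pow 2)).sub hPw).sub hE).sub_const
    (L.weierstrassP w)
  have e : -2 * (-L.weierstrassP w - 0) + ((-L.weierstrassP w - 0) * 0) ^ 2 - L.weierstrassP w - 0
    - L.weierstrassP w = 0 := by ring
  rw [e] at hlim
  refine hlim.congr' (eventually_nhdsWithin_of_forall fun v hv ↦ ?_)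
  have hv0 : v ≠ 0 := hv
  rw [additionDefect, L.weierstrassP_eq_inv_sq_add v]
  field_simp
  ring

lemma tendsto_additionDefect_of_mem (h : L.IsZeta Z) {w l : ℂ} (hw : w ∉ L.lattice)
    (hl : l ∈ L.lattice) : Tendsto (additionDefect L Z w) (𝓝[≠] l) (𝓝 0) := by
  have hsub : Tendsto (fun v ↦ v - l) (𝓝[≠] l) (𝓝[≠] 0) := by
    refine tendsto_nhdsWithin_iff.2 ⟨?_, ?_⟩
    · have : Tendsto (fun v : ℂ ↦ v - l) (𝓝 l) (𝓝 (l - l)) :=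
        (continuous_sub_right l).tendsto l
      rw [sub_self] at this
      exact this.mono_left nhdsWithin_le_nhds
    · filter_upwards [self_mem_nhdsWithin] with v hv
      simpa [sub_eq_zero] using hv
  have hlw : l + w ∉ L.lattice := fun hmem ↦ hw (by simpa using L.lattice.sub_mem hmem hl)
  have hev : ∀ᶠ v in 𝓝[≠] l, v + w ∉ L.lattice :=
    mem_nhdsWithin_of_mem_nhds ((continuous_add_const w).continuousAt.preimage_mem_nhds
      (L.isClosed_lattice.isOpen_compl.mem_nhds hlw))
  refine ((h.tendsto_additionDefect_zero hw).comp hsub).congr' ?_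
  filter_upwards [L.eventually_nhdsNE_notMem_lattice l, hev] with v hv hvw
  simp only [Function.comp, sub_eq_add_neg]
  exact h.additionDefect_add (L.lattice.neg_mem hl) hv hvw

lemma differentiableAt_additionDefect (h : L.IsZeta Z) {w v : ℂ} (hv : v ∉ L.lattice)
    (hvw : v + w ∉ L.lattice) : DifferentiableAt ℂ (additionDefect L Z w) v := by
  have h1 := (h.hasDerivAt v hv).differentiableAt
  have h2 := ((h.hasDerivAt _ hvw).comp_add_const v w).differentiableAt
  have h3 := (L.hasDerivAt_weierstrassP hv).differentiableAt
  have h4 := ((L.hasDerivAt_weierstrassP hvw).comp_add_const v w).differentiableAt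
  exact ((((h2.sub h1).sub_const _).pow 2 |>.sub h4).sub h3).sub_const _

/-- The addition theorem `(ζ(v + w) - ζ(v) - ζ(w))² = ℘(v + w) + ℘(v) + ℘(w)`. -/
lemma sq_sub_sub_eq (h : L.IsZeta Z) {w v : ℂ} (hw : w ∉ L.lattice) (hv : v ∉ L.lattice)
    (hvw : v + w ∉ L.lattice) :
    (Z (v + w) - Z v - Z w) ^ 2 = L.weierstrassP (v + w) + L.weierstrassP v + L.weierstrassP w := by
  have htr : ∀ z, ∀ᶠ x in 𝓝[≠] z, x + w ∉ L.lattice := by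
    intro z
    have ht : Tendsto (fun x ↦ x + w) (𝓝[≠] z) (𝓝[≠] (z + w)) := by
      refine tendsto_nhdsWithin_iff.2 ⟨?_, ?_⟩
      · exact ((continuous_add_const w).tendsto z).mono_left nhdsWithin_le_nhds
      · filter_upwards [self_mem_nhdsWithin] with x hx
        simpa using hx
    exact ht.eventually (L.eventually_nhdsNE_notMem_lattice (z + w))
  obtain ⟨c, hc⟩ := L.exists_forall_tendsto_of_periodic (f := additionDefect L Z w)
    (fun z ↦ by
      filter_upwards [L.eventually_nhdsNE_notMem_lattice z, htr z] with x hx hxw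
      exact h.differentiableAt_additionDefect hx hxw)
    (fun z ↦ by
      by_cases hz : z ∈ L.lattice
      · exact ⟨0, h.tendsto_additionDefect_of_mem hw hz⟩
      by_cases hzw : z + w ∈ L.lattice
      · refine ⟨0, ?_⟩
        have hmem : -w - z ∈ L.lattice := by
          have := L.lattice.neg_mem hzw
          rwa [neg_add_rev, ← sub_eq_add_neg] at this
        have ht : Tendsto (fun x ↦ -w - x) (𝓝[≠] z) (𝓝[≠] (-w - z)) := by
          refine tendsto_nhdsWithin_iff.2 ⟨?_, ?_⟩
          · have : Tendsto (fun x : ℂ ↦ -w - x) (𝓝 z) (𝓝 (-w - z)) :=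
              (continuous_sub_left (-w)).tendsto z
            exact this.mono_left nhdsWithin_le_nhds
          · filter_upwards [self_mem_nhdsWithin] with x hx
            simpa using hx
        exact ((h.tendsto_additionDefect_of_mem hw hmem).comp ht).congr
          fun x ↦ h.additionDefect_reflect w x
      · exact ⟨_, (h.differentiableAt_additionDefect hz hzw).continuousAt.tendsto.mono_left
          nhdsWithin_le_nhds⟩)
    (fun l hl z ↦ by
      filter_upwards [L.eventually_nhdsNE_notMem_lattice z, htr z] with x hx hxw
      exact h.additionDefect_add hl hx hxw)
  have hc0 : c = 0 := tendsto_nhds_unique (hc 0) (h.tendsto_additionDefect_zero hw)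
  have := tendsto_nhds_unique (hc v)
    ((h.differentiableAt_additionDefect hv hvw).continuousAt.tendsto.mono_left nhdsWithin_le_nhds)
  rw [hc0, additionDefect] at this
  linear_combination -this

end PeriodPair.IsZeta

/-- The pair of periods `1, τ`. -/
noncomputable def upperHalfPeriodPair (τ : ℂ) (hτ : 0 < τ.im) : PeriodPair where
  ω₁ := 1
  ω₂ := τ
  indep := by
    rw [LinearIndependent.pair_iff]
    intro s t hst
    have him := congrArg Complex.im hst
    have hre := congrArg Complex.re hst
    simp only [Complex.add_im, Complex.add_re, Complex.real_smul, Complex.re_ofReal_mul,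
      Complex.im_ofReal_mul, Complex.one_re, Complex.one_im, Complex.zero_re,
      Complex.zero_im] at him hre
    have ht : t = 0 := by
      have : t * τ.im = 0 := by linarith
      exact (mul_eq_zero.1 this).resolve_right hτ.ne'
    subst ht
    exact ⟨by linarith, rfl⟩

lemma mem_upperHalfPeriodPair_lattice {τ : ℂ} (hτ : 0 < τ.im) {z : ℂ} :
    z ∈ (upperHalfPeriodPair τ hτ).lattice ↔ InLattice τ z := by
  rw [PeriodPair.mem_lattice]
  simp only [upperHalfPeriodPair, mul_one, InLattice, eq_comm]

lemma wp_eq_weierstrassP {τ : ℂ} (hτ : 0 < τ.im) :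
    wp τ = (upperHalfPeriodPair τ hτ).weierstrassP := by
  funext z
  set L := upperHalfPeriodPair τ hτ with hL
  rw [L.weierstrassP_eq_inv_sq_add, wp]
  congr 1
  have hval : ∀ x : ℤ × ℤ, ((L.latticeEquivProd.symm x : L.lattice) : ℂ) = x.1 + x.2 * τ := by
    intro x
    rw [L.latticeEquiv_symm_apply]
    simp [hL, upperHalfPeriodPair]
  rw [PeriodPair.weierstrassPExcept, ← L.latticeEquivProd.symm.toEquiv.tsum_eq]
  refine (tsum_subtype {x : ℤ × ℤ | x ≠ 0} (fun x : ℤ × ℤ ↦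
    (z - ((x.1 : ℂ) + (x.2 : ℂ) * τ))⁻¹ ^ 2 - ((x.1 : ℂ) + (x.2 : ℂ) * τ)⁻¹ ^ 2)).trans
      (tsum_congr fun x ↦ ?_)
  simp only [LinearEquiv.coe_toEquiv, Set.indicator_apply, Set.mem_ofPred_eq, ne_eq]
  by_cases hx : x = 0
  · simp [hx]
  · have hx' : ((L.latticeEquivProd.symm x : L.lattice) : ℂ) ≠ 0 := by
      simpa using hx
    rw [if_pos hx, if_neg hx', hval]
    simp

lemma IsWeierstrassZeta.isZeta {zeta : ℂ → ℂ → ℂ} {eta1 eta2 : ℂ → ℂ}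
    (hzeta : IsWeierstrassZeta zeta) (heta1 : IsEta1 zeta eta1) (heta2 : IsEta2 zeta eta2)
    {τ : ℂ} (hτ : 0 < τ.im) : (upperHalfPeriodPair τ hτ).IsZeta (zeta τ) := by
  obtain ⟨hneg, hder, hlim⟩ := hzeta τ hτ
  refine ⟨hneg, fun z hz ↦ ?_, hlim, fun l hl ↦ ?_⟩
  · rw [← wp_eq_weierstrassP hτ]
    exact hder z ((mem_upperHalfPeriodPair_lattice hτ).not.1 hz)
  · set Λ := (upperHalfPeriodPair τ hτ).lattice
    have hmem {z : ℂ} : z ∈ Λ ↔ InLattice τ z := mem_upperHalfPeriodPair_lattice hτ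
    induction hl using Submodule.span_induction with
    | mem x hx =>
      rcases hx with hx | hx
      · exact ⟨eta1 τ, fun z hz ↦ by
          rw [heta1 τ hτ z (hmem.not.1 hz), hx]
          simp [upperHalfPeriodPair]⟩
      · exact ⟨eta2 τ, fun z hz ↦ by
          rw [heta2 τ hτ z (hmem.not.1 hz), hx]
          simp [upperHalfPeriodPair]⟩
    | zero => exact ⟨0, fun z _ ↦ by simp⟩
    | add x y hx hy ihx ihy =>
      obtain ⟨η, hη⟩ := ihx
      obtain ⟨η', hη'⟩ := ihy
      refine ⟨η + η', fun z hz ↦ ?_⟩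
      have hzx : z + x ∉ Λ := fun h ↦ hz (by simpa using Λ.sub_mem h hx)
      rw [← add_assoc, hη' _ hzx, hη z hz, add_assoc]
    | smul n x hx ih =>
      obtain ⟨η, hη⟩ := ih
      refine ⟨n * η, fun z hz ↦ ?_⟩
      have hzn : ∀ m : ℤ, z + m • x ∉ Λ := fun m h ↦
        hz (by simpa using Λ.sub_mem h (Λ.smul_mem m hx))
      induction n with
      | zero => simp
      | succ k ih =>
        rw [add_smul, one_smul, ← add_assoc, hη _ (hzn _), ih]
        push_cast
        ring
      | pred k ih =>
        have := hη _ (hzn (-(k : ℤ) - 1))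
        rw [sub_smul, one_smul, add_assoc, sub_add_cancel, ih] at this
        rw [sub_smul, one_smul]
        push_cast at this ⊢
        linear_combination -this

/-- Remark 2.8: for `n_k = 0` and `B = A² - ζ(2p)A - (3/4)℘(2p)`, the
function `Φ(z) = ζ(z+p) - ζ(z-p) - ζ(2p) - 2A` is an even elliptic solution of the second
symmetric power equation `Φ‴ - 4IΦ′ - 2I′Φ = 0`. -/
theorem even_elliptic_solution_example
    (τ : ℂ) (hτ : 0 < τ.im) (A p : ℂ)
    (zeta : ℂ → ℂ → ℂ) (eta1 eta2 : ℂ → ℂ)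
    (hzeta : IsWeierstrassZeta zeta) (heta1 : IsEta1 zeta eta1) (heta2 : IsEta2 zeta eta2)
    (hp : ¬ InLattice τ (2 * p))
    (B : ℂ) (hB : B = A ^ 2 - zeta τ (2 * p) * A - (3 / 4) * wp τ (2 * p))
    (Iz : ℂ → ℂ)
    (hI : ∀ z : ℂ, Iz z = (3 / 4) * (wp τ (z + p) + wp τ (z - p))
      + A * (zeta τ (z + p) - zeta τ (z - p)) + B)
    (Φ : ℂ → ℂ)
    (hΦ : ∀ z : ℂ, Φ z = zeta τ (z + p) - zeta τ (z - p) - zeta τ (2 * p) - 2 * A) :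
    (∀ z : ℂ, Φ (-z) = Φ z) ∧
    (∀ z : ℂ, ¬ InLattice τ (z + p) → ¬ InLattice τ (z - p) →
      Φ (z + 1) = Φ z ∧ Φ (z + τ) = Φ z) ∧
    (∀ z : ℂ, ¬ InLattice τ (z + p) → ¬ InLattice τ (z - p) →
      deriv (deriv (deriv Φ)) z - 4 * Iz z * deriv Φ z - 2 * deriv Iz z * Φ z = 0) := by
  have hP : wp τ = (upperHalfPeriodPair τ hτ).weierstrassP := wp_eq_weierstrassP hτ
  have hZ := hzeta.isZeta heta1 heta2 hτ
  have hmem (z : ℂ) : z ∈ (upperHalfPeriodPair τ hτ).lattice ↔ InLattice τ z :=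
    mem_upperHalfPeriodPair_lattice hτ
  set L := upperHalfPeriodPair τ hτ
  set Z := zeta τ
  simp only [← hmem] at hp ⊢
  refine ⟨fun z ↦ ?_, fun z h₁ h₂ ↦ ⟨?_, ?_⟩, fun z h₁ h₂ ↦ ?_⟩
  · have e1 : -z + p = -(z - p) := by ring
    have e2 : -z - p = -(z + p) := by ring
    rw [hΦ, hΦ, e1, e2, hZ.neg, hZ.neg]
    ring
  · have a1 := heta1 τ hτ (z + p) ((hmem _).not.1 h₁)
    have a2 := heta1 τ hτ (z - p) ((hmem _).not.1 h₂)
    rw [hΦ, hΦ, show z + 1 + p = z + p + 1 by ring, show z + 1 - p = z - p + 1 by ring]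
    linear_combination a2 - a1
  · have a1 := heta2 τ hτ (z + p) ((hmem _).not.1 h₁)
    have a2 := heta2 τ hτ (z - p) ((hmem _).not.1 h₂)
    rw [hΦ, hΦ, show z + τ + p = z + p + τ by ring, show z + τ - p = z - p + τ by ring]
    linear_combination a2 - a1
  · set U : Set ℂ := {x | x + p ∉ L.lattice ∧ x - p ∉ L.lattice}
    have hΛ := L.isClosed_lattice.isOpen_compl
    have hU : IsOpen U :=
      (hΛ.preimage (continuous_add_const p)).inter (hΛ.preimage (continuous_sub_right p))
    have hzU : z ∈ U := ⟨h₁, h₂⟩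
    have hΦd : ∀ x ∈ U, HasDerivAt Φ (L.weierstrassP (x - p) - L.weierstrassP (x + p)) x := by
      intro x hx
      have d1 := (hZ.hasDerivAt _ hx.1).comp_add_const x p
      have d2 := (hZ.hasDerivAt _ hx.2).comp_sub_const x p
      rw [funext hΦ]
      exact (((d1.sub d2).sub_const (Z (2 * p))).sub_const (2 * A)).congr_deriv (by ring)
    have hΦd2 : ∀ x ∈ U, HasDerivAt (deriv Φ)
        (L.derivWeierstrassP (x - p) - L.derivWeierstrassP (x + p)) x := by
      intro x hx
      have d1 := (L.hasDerivAt_weierstrassP hx.1).comp_add_const x p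
      have d2 := (L.hasDerivAt_weierstrassP hx.2).comp_sub_const x p
      exact (d2.sub d1).congr_of_eventuallyEq
        ((hU.eventually_mem hx).mono fun y hy ↦ (hΦd y hy).deriv)
    have hΦd3 : HasDerivAt (deriv (deriv Φ))
        (6 * L.weierstrassP (z - p) ^ 2 - 6 * L.weierstrassP (z + p) ^ 2) z := by
      have d1 := (L.hasDerivAt_derivWeierstrassP h₁).comp_add_const z p
      have d2 := (L.hasDerivAt_derivWeierstrassP h₂).comp_sub_const z p
      have e : 6 * L.weierstrassP (z - p) ^ 2 - 6 * L.weierstrassP (z + p) ^ 2 =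
          (6 * L.weierstrassP (z - p) ^ 2 - L.g₂ / 2) -
            (6 * L.weierstrassP (z + p) ^ 2 - L.g₂ / 2) := by ring
      rw [e]
      exact (d2.sub d1).congr_of_eventuallyEq
        ((hU.eventually_mem hzU).mono fun y hy ↦ (hΦd2 y hy).deriv)
    have hadd : ∀ x ∈ U, (Z (x + p) - Z (x - p) - Z (2 * p)) ^ 2 =
        L.weierstrassP (x + p) + L.weierstrassP (x - p) + L.weierstrassP (2 * p) := by
      intro x hx
      have e : x - p + 2 * p = x + p := by ring
      have := hZ.sq_sub_sub_eq hp hx.2 (by rw [e]; exact hx.1)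
      rwa [e] at this
    -- On `U` the potential is a quadratic polynomial in `Φ`.
    have hIΦ : ∀ x ∈ U, Iz x = 3 / 4 * (Φ x + 2 * A) ^ 2 + A * (Φ x + 2 * A) + A ^ 2
        - 3 / 2 * L.weierstrassP (2 * p) := by
      intro x hx
      rw [hI, hB, hP, hΦ]
      linear_combination (-3 / 4 : ℂ) * hadd x hx
    have hId : HasDerivAt Iz ((3 / 2 * (Φ z + 2 * A) + A) *
        (L.weierstrassP (z - p) - L.weierstrassP (z + p))) z := by
      have d := (hΦd z hzU).add_const (2 * A)
      have d' := ((((d.pow 2).const_mul (3 / 4)).add (d.const_mul A)).add_const (A ^ 2)).sub_const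
        (3 / 2 * L.weierstrassP (2 * p))
      refine (d'.congr_of_eventuallyEq
        ((hU.eventually_mem hzU).mono fun y hy ↦ hIΦ y hy)).congr_deriv ?_
      norm_num
      ring
    have hsq := hadd z hzU
    have hF : Φ z + 2 * A = Z (z + p) - Z (z - p) - Z (2 * p) := by
      rw [hΦ]
      ring
    rw [← hF] at hsq
    rw [hΦd3.deriv, (hΦd z hzU).deriv, hId.deriv, hIΦ z hzU]
    linear_combination (-6 : ℂ) * (L.weierstrassP (z - p) - L.weierstrassP (z + p)) * hsq
end

section
/- For every τ ∈ ℍ, the theta nullwerte satisfy d/dτ log ϑ₄(τ) = (i/(12π))[3η₁(τ) − π²(2ϑ₂(τ)⁴ + ϑ₄(τ)⁴)] and d/dτ log ϑ₃(τ) = (i/(12π))[3η₁(τ) + π²(ϑ₂(τ)⁴ − ϑ₄(τ)⁴)]. -/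
open Complex Filter Topology Asymptotics

noncomputable section

/-- the theta nullwert `ϑ₂(τ) = Σ e^{πiτ(n+1/2)²}`. -/
def thetaNull2 (τ : ℂ) : ℂ :=
  ∑' n : ℤ, Complex.exp ((Real.pi : ℂ) * Complex.I * τ * ((n : ℂ) + 1 / 2) ^ 2)

/-- the theta nullwert `ϑ₃(τ) = Σ e^{πiτn²}`. -/
def thetaNull3 (τ : ℂ) : ℂ :=
  ∑' n : ℤ, Complex.exp ((Real.pi : ℂ) * Complex.I * τ * (n : ℂ) ^ 2)

/-- the theta nullwert `ϑ₄(τ) = Σ (-1)ⁿ e^{πiτn²}`. -/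
def thetaNull4 (τ : ℂ) : ℂ :=
  ∑' n : ℤ, (-1 : ℂ) ^ n * Complex.exp ((Real.pi : ℂ) * Complex.I * τ * (n : ℂ) ^ 2)


lemma summable_gaussian_bound {t : ℝ} (ht : 0 < t) :
    Summable fun n : ℤ ↦ (1 + (n : ℝ) ^ 2) ^ 2 * Real.exp (-Real.pi * t * ((n : ℝ) ^ 2 - |(n : ℝ)|)) := by
  have h (k : ℕ) := summable_pow_mul_jacobiTheta₂_term_bound (t / 2) ht k
  refine (((h 0).add ((h 2).mul_left 2)).add (h 4)).congr fun n ↦ ?_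
  have h2 : (((|n| : ℤ) : ℝ)) ^ 2 = (n : ℝ) ^ 2 := by push_cast; exact sq_abs _
  have h4 : (((|n| : ℤ) : ℝ)) ^ 4 = (n : ℝ) ^ 4 := by
    rw [show (4 : ℕ) = 2 * 2 from rfl, pow_mul, h2, ← pow_mul]
  rw [h2, h4, show -Real.pi * t * ((n : ℝ) ^ 2 - |(n : ℝ)|)
    = -Real.pi * (t * n ^ 2 - 2 * (t / 2) * |(n : ℝ)|) by ring]
  push_cast
  ring

/-- Coefficients and exponents of quadratic growth, as in the series of the theta nullwerte. -/
structure ThetaGrowth (c : ℤ → ℂ) (a : ℤ → ℝ) : Prop where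
  coeff_le : ∀ n : ℤ, ‖c n‖ ≤ 10 * (1 + (n : ℝ) ^ 2)
  le_exponent : ∀ n : ℤ, (n : ℝ) ^ 2 - |(n : ℝ)| ≤ a n
  exponent_le : ∀ n : ℤ, a n ≤ 10 * (1 + (n : ℝ) ^ 2)

namespace ThetaGrowth

variable {c : ℤ → ℂ} {a : ℤ → ℝ}

lemma exponent_nonneg (h : ThetaGrowth c a) (n : ℤ) : 0 ≤ a n := by
  refine le_trans ?_ (h.le_exponent n)
  rcases eq_or_ne n 0 with rfl | hn
  · simp
  · have : (1 : ℝ) ≤ |(n : ℝ)| := by exact_mod_cast Int.one_le_abs hn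
    nlinarith [sq_abs (n : ℝ)]

lemma norm_cexp_le (h : ThetaGrowth c a) {t : ℝ} (ht : 0 < t) {τ : ℂ} (hτ : t ≤ τ.im) (n : ℤ) :
    ‖cexp (Real.pi * I * τ * a n)‖ ≤
      Real.exp (-Real.pi * t * ((n : ℝ) ^ 2 - |(n : ℝ)|)) := by
  rw [Complex.norm_exp, Real.exp_le_exp]
  have : (Real.pi * I * τ * a n : ℂ).re = -(Real.pi * (τ.im * a n)) := by
    simp; ring
  rw [this]
  have h1 : t * ((n : ℝ) ^ 2 - |(n : ℝ)|) ≤ τ.im * a n :=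
    (mul_le_mul_of_nonneg_left (h.le_exponent n) ht.le).trans
      (mul_le_mul_of_nonneg_right hτ (h.exponent_nonneg n))
  nlinarith [mul_le_mul_of_nonneg_left h1 Real.pi_pos.le]

lemma norm_term_le (h : ThetaGrowth c a) {t : ℝ} (ht : 0 < t) {τ : ℂ} (hτ : t ≤ τ.im) (n : ℤ) :
    ‖c n * cexp (Real.pi * I * τ * a n)‖ ≤ 10 *
      ((1 + (n : ℝ) ^ 2) ^ 2 * Real.exp (-Real.pi * t * ((n : ℝ) ^ 2 - |(n : ℝ)|))) := by
  rw [norm_mul, ← mul_assoc]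
  refine mul_le_mul ((h.coeff_le n).trans ?_) (h.norm_cexp_le ht hτ n) (norm_nonneg _) (by positivity)
  nlinarith [sq_nonneg (n : ℝ)]

lemma norm_deriv_term_le (h : ThetaGrowth c a) {t : ℝ} (ht : 0 < t) {τ : ℂ} (hτ : t ≤ τ.im)
    (n : ℤ) :
    ‖c n * (Real.pi * I * a n) * cexp (Real.pi * I * τ * a n)‖ ≤ 100 * Real.pi *
      ((1 + (n : ℝ) ^ 2) ^ 2 * Real.exp (-Real.pi * t * ((n : ℝ) ^ 2 - |(n : ℝ)|))) := by
  rw [norm_mul, ← mul_assoc (100 * Real.pi)]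
  refine mul_le_mul ?_ (h.norm_cexp_le ht hτ n) (norm_nonneg _) (by positivity)
  have : ‖(Real.pi * I * a n : ℂ)‖ = Real.pi * a n := by
    simp [abs_of_pos Real.pi_pos, abs_of_nonneg (h.exponent_nonneg n)]
  rw [norm_mul (c n), this]
  calc ‖c n‖ * (Real.pi * a n)
      ≤ (10 * (1 + (n : ℝ) ^ 2)) * (Real.pi * (10 * (1 + (n : ℝ) ^ 2))) := by
        gcongr
        · exact mul_nonneg Real.pi_pos.le (h.exponent_nonneg n)
        · exact h.coeff_le n
        · exact h.exponent_le n
    _ = _ := by ring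

lemma summable_norm (h : ThetaGrowth c a) {τ : ℂ} (hτ : 0 < τ.im) :
    Summable fun n ↦ ‖c n * cexp (Real.pi * I * τ * a n)‖ :=
  .of_nonneg_of_le (fun _ ↦ norm_nonneg _) (h.norm_term_le hτ le_rfl)
    ((summable_gaussian_bound hτ).mul_left _)

lemma summable_norm_deriv (h : ThetaGrowth c a) {τ : ℂ} (hτ : 0 < τ.im) :
    Summable fun n ↦ ‖c n * (Real.pi * I * a n) * cexp (Real.pi * I * τ * a n)‖ :=
  .of_nonneg_of_le (fun _ ↦ norm_nonneg _) (h.norm_deriv_term_le hτ le_rfl)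
    ((summable_gaussian_bound hτ).mul_left _)

lemma hasDerivAt (h : ThetaGrowth c a) {τ : ℂ} (hτ : 0 < τ.im) :
    HasDerivAt (fun τ ↦ ∑' n, c n * cexp (Real.pi * I * τ * a n))
      (∑' n, c n * (Real.pi * I * a n) * cexp (Real.pi * I * τ * a n)) τ := by
  have ht : 0 < τ.im / 2 := half_pos hτ
  refine hasDerivAt_tsum_of_isPreconnected ((summable_gaussian_bound ht).mul_left (100 * Real.pi))
    (t := {z : ℂ | τ.im / 2 < z.im}) (y₀ := τ) (isOpen_lt continuous_const continuous_im)
    (convex_halfSpace_im_gt _).isPreconnected (g := fun n z ↦ c n * cexp (Real.pi * I * z * a n))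
    (fun n z _ ↦ ?_) (fun n z hz ↦ h.norm_deriv_term_le ht (le_of_lt hz) n) ?_
    (h.summable_norm hτ).of_norm ?_
  · have h1 : HasDerivAt (fun z : ℂ ↦ Real.pi * I * z * a n) (Real.pi * I * a n) z := by
      simpa using ((hasDerivAt_id z).const_mul (Real.pi * I : ℂ)).mul_const (a n : ℂ)
    simpa only [mul_comm, mul_left_comm, mul_assoc] using h1.cexp.const_mul (c n)
  · exact half_lt_self hτ
  · exact half_lt_self hτ

lemma tendsto (h : ThetaGrowth c a) :
    Tendsto (fun τ ↦ ∑' n, c n * cexp (Real.pi * I * τ * a n)) (comap im atTop)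
      (𝓝 (∑' n, if a n = 0 then c n else 0)) := by
  refine tendsto_tsum_of_dominated_convergence
    ((summable_gaussian_bound one_pos).mul_left 10) (fun n ↦ ?_) ?_
  · split_ifs with ha
    · simpa [ha] using tendsto_const_nhds
    · have hpos : 0 < a n := lt_of_le_of_ne (h.exponent_nonneg n) (Ne.symm ha)
      rw [tendsto_zero_iff_norm_tendsto_zero]
      have : (fun τ : ℂ ↦ ‖c n * cexp (Real.pi * I * τ * a n)‖) =
          (fun y : ℝ ↦ ‖c n‖ * Real.exp (-(Real.pi * a n * y))) ∘ im := by
        ext τ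
        simp only [norm_mul, Complex.norm_exp, Function.comp]
        congr 2
        simp; ring
      rw [this]
      refine Tendsto.comp ?_ tendsto_comap
      have : Tendsto (fun y : ℝ ↦ Real.pi * a n * y) atTop atTop :=
        tendsto_id.const_mul_atTop (mul_pos Real.pi_pos hpos)
      simpa using (Real.tendsto_exp_neg_atTop_nhds_zero.comp this).const_mul ‖c n‖
  · filter_upwards [preimage_mem_comap (eventually_ge_atTop (1 : ℝ))] with τ hτ n
    exact h.norm_term_le one_pos hτ n

end ThetaGrowth

lemma tsum_eq_zero_of_antisymm {f : ℤ → ℂ} (e : ℤ ≃ ℤ) (h : ∀ n, f (e n) = -f n) :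
    ∑' n, f n = 0 := by
  have := e.tsum_eq f
  simp only [h, tsum_neg] at this
  exact self_eq_neg.mp this.symm

lemma tsum_int_even_odd {f : ℤ → ℂ} (hf : Summable f) :
    ∑' n, f n = ∑' k, f (2 * k) + ∑' k, f (2 * k + 1) := by
  let e : ℤ ⊕ ℤ → ℤ := Sum.elim (fun k ↦ 2 * k) (fun k ↦ 2 * k + 1)
  have he : e.Bijective := by
    constructor
    · rintro (a | a) (b | b) h <;> simp only [e, Sum.elim_inl, Sum.elim_inr] at h
      · congr 1; omega
      · omega
      · omega
      · congr 1; omega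
    · intro n
      rcases Int.even_or_odd' n with ⟨k, rfl | rfl⟩
      exacts [⟨.inl k, rfl⟩, ⟨.inr k, rfl⟩]
  let E := Equiv.ofBijective e he
  have hs : Summable (f ∘ E) := E.summable_iff.mpr hf
  rw [← E.tsum_eq f]
  exact Summable.tsum_sum (f := f ∘ E) (hs.comp_injective Sum.inl_injective)
    (hs.comp_injective Sum.inr_injective)

/-- Summation over `ℤ × ℤ` in the coordinates `(m + n, m - n)`, separated by parity. -/
lemma tsum_rotate {F : ℤ × ℤ → ℂ} (hF : Summable F) :
    ∑' p, F p = ∑' p : ℤ × ℤ, F (p.1 + p.2, p.1 - p.2) +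
      ∑' p : ℤ × ℤ, F (p.1 + p.2 + 1, p.1 - p.2) := by
  let e : (ℤ × ℤ) ⊕ (ℤ × ℤ) → ℤ × ℤ :=
    Sum.elim (fun p ↦ (p.1 + p.2, p.1 - p.2)) (fun p ↦ (p.1 + p.2 + 1, p.1 - p.2))
  have he : e.Bijective := by
    constructor
    · rintro (⟨a, a'⟩ | ⟨a, a'⟩) (⟨b, b'⟩ | ⟨b, b'⟩) h <;>
        simp only [e, Sum.elim_inl, Sum.elim_inr, Prod.mk.injEq] at h
      · congr 2 <;> omega
      · omega
      · omega
      · congr 2 <;> omega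
    · rintro ⟨m, n⟩
      rcases Int.even_or_odd' (m + n) with ⟨k, h | h⟩
      · exact ⟨.inl (k, k - n), by simp only [e, Sum.elim_inl, Prod.mk.injEq]; omega⟩
      · exact ⟨.inr (k, k - n), by simp only [e, Sum.elim_inr, Prod.mk.injEq]; omega⟩
  let E := Equiv.ofBijective e he
  have hs : Summable (F ∘ E) := E.summable_iff.mpr hF
  rw [← E.tsum_eq F]
  exact Summable.tsum_sum (f := F ∘ E) (hs.comp_injective Sum.inl_injective)
    (hs.comp_injective Sum.inr_injective)

lemma tsum_rotate_eq_mul {F : ℤ × ℤ → ℂ} (hF : Summable F) {u v u' v' : ℤ → ℂ}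
    (hu : Summable (‖u ·‖)) (hv : Summable (‖v ·‖)) (hu' : Summable (‖u' ·‖))
    (hv' : Summable (‖v' ·‖)) (h : ∀ a b, F (a + b, a - b) = u a * v b)
    (h' : ∀ a b, F (a + b + 1, a - b) = u' a * v' b) :
    ∑' p, F p = (∑' n, u n) * ∑' n, v n + (∑' n, u' n) * ∑' n, v' n := by
  rw [tsum_rotate hF, tsum_mul_tsum_of_summable_norm hu hv, tsum_mul_tsum_of_summable_norm hu' hv']
  simp only [h, h']

lemma neg_one_zpow_sub (a b : ℤ) : (-1 : ℂ) ^ (a - b) = (-1) ^ a * (-1) ^ b := by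
  rw [sub_eq_add_neg, zpow_add₀ (by simp), zpow_neg, ← inv_zpow, inv_neg, inv_one]

/-- The series `Σ (-1)ⁿ (2n+1) e^{πiτ(n+1/2)²}`, a multiple of the derivative of `ϑ₁` at `0`. -/
def thetaDeriv1 (τ : ℂ) : ℂ :=
  ∑' n : ℤ, (-1 : ℂ) ^ n * (2 * n + 1) *
    cexp ((Real.pi : ℂ) * I * τ * ((n : ℂ) + 1 / 2) ^ 2)

lemma norm_two_mul_add_one_le (n : ℤ) : ‖(2 * n + 1 : ℂ)‖ ≤ 10 * (1 + (n : ℝ) ^ 2) := by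
  have : (2 * n + 1 : ℂ) = ((2 * n + 1 : ℝ) : ℂ) := by push_cast; ring
  rw [this, Complex.norm_real, Real.norm_eq_abs, abs_le]
  constructor <;> nlinarith [sq_nonneg ((n : ℝ) + 1), sq_nonneg ((n : ℝ) - 1)]

lemma one_le_growth (n : ℤ) : (1 : ℝ) ≤ 10 * (1 + (n : ℝ) ^ 2) := by nlinarith [sq_nonneg (n : ℝ)]

lemma thetaGrowth_sq {c : ℤ → ℂ} (hc : ∀ n : ℤ, ‖c n‖ ≤ 10 * (1 + (n : ℝ) ^ 2)) :
    ThetaGrowth c (fun n ↦ (n : ℝ) ^ 2) :=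
  ⟨hc, fun n ↦ by linarith [abs_nonneg (n : ℝ)], fun n ↦ by nlinarith [sq_nonneg (n : ℝ)]⟩

lemma thetaGrowth_add_half_sq {c : ℤ → ℂ} (hc : ∀ n : ℤ, ‖c n‖ ≤ 10 * (1 + (n : ℝ) ^ 2)) :
    ThetaGrowth c (fun n ↦ ((n : ℝ) + 1 / 2) ^ 2) :=
  ⟨hc, fun n ↦ by nlinarith [neg_abs_le (n : ℝ)], fun n ↦ by nlinarith [sq_nonneg ((n : ℝ) - 1)]⟩

lemma thetaGrowth_two_mul_add_half_sq {c : ℤ → ℂ}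
    (hc : ∀ n : ℤ, ‖c n‖ ≤ 10 * (1 + (n : ℝ) ^ 2)) :
    ThetaGrowth c (fun n ↦ (2 * (n : ℝ) + 1 / 2) ^ 2) :=
  ⟨hc, fun n ↦ by nlinarith [neg_abs_le (n : ℝ), sq_nonneg ((n : ℝ) + 1 / 6)],
    fun n ↦ by nlinarith [sq_nonneg ((n : ℝ) - 1)]⟩

lemma thetaGrowth_sq_add_self {c : ℤ → ℂ} (hc : ∀ n : ℤ, ‖c n‖ ≤ 10 * (1 + (n : ℝ) ^ 2)) :
    ThetaGrowth c (fun n ↦ (n : ℝ) ^ 2 + n) :=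
  ⟨hc, fun n ↦ by nlinarith [neg_abs_le (n : ℝ)], fun n ↦ by nlinarith [sq_nonneg ((n : ℝ) - 1)]⟩

section summability

variable {c : ℤ → ℂ} {τ : ℂ}

lemma summable_norm_cexp_sq (hc : ∀ n : ℤ, ‖c n‖ ≤ 10 * (1 + (n : ℝ) ^ 2)) (hτ : 0 < τ.im) :
    Summable fun n : ℤ ↦ ‖c n * cexp (Real.pi * I * τ * (n : ℂ) ^ 2)‖ := by
  simpa only [ofReal_pow, ofReal_intCast] using (thetaGrowth_sq hc).summable_norm hτ

lemma summable_norm_cexp_add_half_sq (hc : ∀ n : ℤ, ‖c n‖ ≤ 10 * (1 + (n : ℝ) ^ 2))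
    (hτ : 0 < τ.im) :
    Summable fun n : ℤ ↦ ‖c n * cexp (Real.pi * I * τ * ((n : ℂ) + 1 / 2) ^ 2)‖ := by
  simpa only [ofReal_pow, ofReal_intCast, ofReal_add, ofReal_div, ofReal_one, ofReal_ofNat]
    using (thetaGrowth_add_half_sq hc).summable_norm hτ

lemma summable_norm_cexp_two_mul_add_half_sq (hc : ∀ n : ℤ, ‖c n‖ ≤ 10 * (1 + (n : ℝ) ^ 2))
    (hτ : 0 < τ.im) :
    Summable fun n : ℤ ↦ ‖c n * cexp (Real.pi * I * τ * (2 * (n : ℂ) + 1 / 2) ^ 2)‖ := by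
  simpa only [ofReal_pow, ofReal_intCast, ofReal_add, ofReal_div, ofReal_one, ofReal_ofNat,
    ofReal_mul] using (thetaGrowth_two_mul_add_half_sq hc).summable_norm hτ

lemma summable_norm_deriv_cexp_sq (hc : ∀ n : ℤ, ‖c n‖ ≤ 10 * (1 + (n : ℝ) ^ 2)) (hτ : 0 < τ.im) :
    Summable fun n : ℤ ↦
      ‖c n * (Real.pi * I * (n : ℂ) ^ 2) * cexp (Real.pi * I * τ * (n : ℂ) ^ 2)‖ := by
  simpa only [ofReal_pow, ofReal_intCast] using (thetaGrowth_sq hc).summable_norm_deriv hτ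

lemma summable_norm_deriv_cexp_add_half_sq (hc : ∀ n : ℤ, ‖c n‖ ≤ 10 * (1 + (n : ℝ) ^ 2))
    (hτ : 0 < τ.im) :
    Summable fun n : ℤ ↦ ‖c n * (Real.pi * I * ((n : ℂ) + 1 / 2) ^ 2) *
      cexp (Real.pi * I * τ * ((n : ℂ) + 1 / 2) ^ 2)‖ := by
  simpa only [ofReal_pow, ofReal_intCast, ofReal_add, ofReal_div, ofReal_one, ofReal_ofNat]
    using (thetaGrowth_add_half_sq hc).summable_norm_deriv hτ

end summability

lemma norm_one_le_growth (n : ℤ) : ‖(1 : ℂ)‖ ≤ 10 * (1 + (n : ℝ) ^ 2) := by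
  simpa using one_le_growth n

lemma norm_neg_one_zpow_le_growth (n : ℤ) : ‖(-1 : ℂ) ^ n‖ ≤ 10 * (1 + (n : ℝ) ^ 2) := by
  simpa using one_le_growth n

lemma norm_neg_one_zpow_mul_le_growth (n : ℤ) :
    ‖(-1 : ℂ) ^ n * (2 * n + 1)‖ ≤ 10 * (1 + (n : ℝ) ^ 2) := by
  rw [norm_mul, norm_zpow, norm_neg, norm_one, one_zpow, one_mul]
  exact norm_two_mul_add_one_le n

lemma hasDerivAt_thetaNull2 {τ : ℂ} (hτ : 0 < τ.im) :
    HasDerivAt thetaNull2 (∑' n : ℤ, 1 * (Real.pi * I * ((n : ℂ) + 1 / 2) ^ 2) *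
      cexp (Real.pi * I * τ * ((n : ℂ) + 1 / 2) ^ 2)) τ := by
  simpa only [ofReal_pow, ofReal_intCast, ofReal_add, ofReal_div, ofReal_one, ofReal_ofNat,
    one_mul] using! (thetaGrowth_add_half_sq norm_one_le_growth).hasDerivAt hτ

lemma hasDerivAt_thetaNull3 {τ : ℂ} (hτ : 0 < τ.im) :
    HasDerivAt thetaNull3 (∑' n : ℤ, 1 * (Real.pi * I * (n : ℂ) ^ 2) *
      cexp (Real.pi * I * τ * (n : ℂ) ^ 2)) τ := by
  simpa only [ofReal_pow, ofReal_intCast, one_mul] using!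
    (thetaGrowth_sq norm_one_le_growth).hasDerivAt hτ

lemma hasDerivAt_thetaNull4 {τ : ℂ} (hτ : 0 < τ.im) :
    HasDerivAt thetaNull4 (∑' n : ℤ, (-1) ^ n * (Real.pi * I * (n : ℂ) ^ 2) *
      cexp (Real.pi * I * τ * (n : ℂ) ^ 2)) τ := by
  simpa only [ofReal_pow, ofReal_intCast] using!
    (thetaGrowth_sq norm_neg_one_zpow_le_growth).hasDerivAt hτ

lemma differentiableAt_thetaDeriv1 {τ : ℂ} (hτ : 0 < τ.im) : DifferentiableAt ℂ thetaDeriv1 τ := by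
  have := ((thetaGrowth_add_half_sq norm_neg_one_zpow_mul_le_growth).hasDerivAt hτ)
  simp only [ofReal_pow, ofReal_intCast, ofReal_add, ofReal_div, ofReal_one, ofReal_ofNat] at this
  exact this.differentiableAt

lemma two_mul_im_pos {τ : ℂ} (hτ : 0 < τ.im) : 0 < (2 * τ).im := by simpa using hτ

lemma div_two_im_pos {τ : ℂ} (hτ : 0 < τ.im) : 0 < (τ / 2).im := by
  rw [show τ / 2 = τ / (2 : ℝ) by push_cast; rfl, div_ofReal_im]; positivity

lemma tsum_neg_one_zpow_mul_cexp_add_half_sq (τ : ℂ) :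
    ∑' n : ℤ, (-1 : ℂ) ^ n * cexp (Real.pi * I * τ * ((n : ℂ) + 1 / 2) ^ 2) = 0 := by
  refine tsum_eq_zero_of_antisymm (Equiv.subLeft (-1)) fun n ↦ ?_
  rw [Equiv.subLeft_apply, neg_one_zpow_sub]
  push_cast
  rw [show (-1 - (n : ℂ) + 1 / 2) ^ 2 = ((n : ℂ) + 1 / 2) ^ 2 by ring]
  norm_num

lemma thetaNull3_mul_thetaNull4 {τ : ℂ} (hτ : 0 < τ.im) :
    thetaNull3 τ * thetaNull4 τ = thetaNull4 (2 * τ) ^ 2 := by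
  have h3 := summable_norm_cexp_sq norm_one_le_growth hτ
  have h4 := summable_norm_cexp_sq norm_neg_one_zpow_le_growth hτ
  have k4 := summable_norm_cexp_sq norm_neg_one_zpow_le_growth (two_mul_im_pos hτ)
  have k1 := summable_norm_cexp_add_half_sq norm_neg_one_zpow_le_growth (two_mul_im_pos hτ)
  simp only [one_mul] at h3
  rw [thetaNull3, thetaNull4, tsum_mul_tsum_of_summable_norm h3 h4,
    tsum_rotate_eq_mul (summable_mul_of_summable_norm h3 h4) k4 k4 k1 k1,
    tsum_neg_one_zpow_mul_cexp_add_half_sq, thetaNull4]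
  · ring
  · intro a b
    simp only [neg_one_zpow_sub]
    push_cast
    rw [mul_left_comm, ← Complex.exp_add, mul_mul_mul_comm, ← Complex.exp_add]
    ring_nf
  · intro a b
    simp only [neg_one_zpow_sub]
    push_cast
    rw [mul_left_comm, ← Complex.exp_add, mul_mul_mul_comm, ← Complex.exp_add]
    ring_nf

lemma thetaNull2_sq {τ : ℂ} (hτ : 0 < τ.im) :
    thetaNull2 τ ^ 2 = 2 * thetaNull2 (2 * τ) * thetaNull3 (2 * τ) := by
  have h2 := summable_norm_cexp_add_half_sq norm_one_le_growth hτ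
  have k2 := summable_norm_cexp_add_half_sq norm_one_le_growth (two_mul_im_pos hτ)
  have k3 := summable_norm_cexp_sq norm_one_le_growth (two_mul_im_pos hτ)
  have k3' := (Equiv.addRight (1 : ℤ)).summable_iff.mpr k3
  have e3 := (Equiv.addRight (1 : ℤ)).tsum_eq
    fun n : ℤ ↦ cexp (Real.pi * I * (2 * τ) * (n : ℂ) ^ 2)
  simp only [one_mul, Function.comp_def] at h2 k2 k3 k3'
  rw [sq, thetaNull2, tsum_mul_tsum_of_summable_norm h2 h2,
    tsum_rotate_eq_mul (summable_mul_of_summable_norm h2 h2) k2 k3 k3' k2, e3,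
    thetaNull2, thetaNull3]
  · ring
  · intro a b
    push_cast
    rw [← Complex.exp_add, ← Complex.exp_add]
    ring_nf
  · intro a b
    simp only [Equiv.coe_addRight]
    push_cast
    rw [← Complex.exp_add, ← Complex.exp_add]
    ring_nf

lemma deriv_thetaNull3_mul_sub {τ : ℂ} (hτ : 0 < τ.im) :
    deriv thetaNull3 τ * thetaNull4 τ - thetaNull3 τ * deriv thetaNull4 τ =
      Real.pi * I * thetaDeriv1 (2 * τ) ^ 2 := by
  have h3 := summable_norm_cexp_sq norm_one_le_growth hτ
  have h4 := summable_norm_cexp_sq norm_neg_one_zpow_le_growth hτ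
  have d3 := summable_norm_deriv_cexp_sq norm_one_le_growth hτ
  have d4 := summable_norm_deriv_cexp_sq norm_neg_one_zpow_le_growth hτ
  have kz := summable_norm_cexp_sq (c := fun n : ℤ ↦ (-1) ^ n * (2 * n)) (fun n ↦ by
    rw [norm_mul, norm_zpow, norm_neg, norm_one, one_zpow, one_mul,
      show (2 * n : ℂ) = ((2 * n : ℝ) : ℂ) by push_cast; ring, Complex.norm_real,
      Real.norm_eq_abs, abs_le]
    constructor <;> nlinarith [sq_nonneg ((n : ℝ) + 1), sq_nonneg ((n : ℝ) - 1)])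
    (two_mul_im_pos hτ)
  have kU := summable_norm_cexp_add_half_sq norm_neg_one_zpow_mul_le_growth (two_mul_im_pos hτ)
  have z : ∑' n : ℤ, (-1 : ℂ) ^ n * (2 * n) * cexp (Real.pi * I * (2 * τ) * (n : ℂ) ^ 2) = 0 := by
    refine tsum_eq_zero_of_antisymm (Equiv.neg ℤ) fun n ↦ ?_
    rw [Equiv.neg_apply, ← zero_sub n, neg_one_zpow_sub, zpow_zero]
    push_cast
    ring_nf
  simp only [one_mul] at h3 d3
  have kz' := kz.mul_left ‖(Real.pi * I : ℂ)‖
  have kU' := kU.mul_left ‖(Real.pi * I : ℂ)‖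
  simp only [← norm_mul] at kz' kU'
  have s1 := summable_mul_of_summable_norm d3 h4
  have s2 := summable_mul_of_summable_norm h3 d4
  rw [(hasDerivAt_thetaNull3 hτ).deriv, (hasDerivAt_thetaNull4 hτ).deriv]
  simp only [one_mul]
  rw [thetaNull3, thetaNull4,
    tsum_mul_tsum_of_summable_norm d3 h4, tsum_mul_tsum_of_summable_norm h3 d4,
    ← s1.tsum_sub s2, tsum_rotate_eq_mul (s1.sub s2) kz' kz kU' kU, z, tsum_mul_left,
    tsum_mul_left, ← thetaDeriv1]
  · ring
  · intro a b
    simp only [neg_one_zpow_sub]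
    push_cast
    have : cexp (Real.pi * I * τ * (a + b) ^ 2) * cexp (Real.pi * I * τ * (a - b) ^ 2) =
        cexp (Real.pi * I * (2 * τ) * a ^ 2) * cexp (Real.pi * I * (2 * τ) * b ^ 2) := by
      rw [← Complex.exp_add, ← Complex.exp_add]
      ring_nf
    linear_combination (-1 : ℂ) ^ a * (-1) ^ b * Real.pi * I * (4 * a * b) * this
  · intro a b
    simp only [neg_one_zpow_sub]
    push_cast
    have : cexp (Real.pi * I * τ * (a + b + 1) ^ 2) * cexp (Real.pi * I * τ * (a - b) ^ 2) =
        cexp (Real.pi * I * (2 * τ) * (a + 1 / 2) ^ 2) *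
          cexp (Real.pi * I * (2 * τ) * (b + 1 / 2) ^ 2) := by
      rw [← Complex.exp_add, ← Complex.exp_add]
      ring_nf
    linear_combination (-1 : ℂ) ^ a * (-1) ^ b * Real.pi * I * ((2 * a + 1) * (2 * b + 1)) * this

lemma norm_two_mul_add_half_le (n : ℤ) : ‖(2 * n + 1 / 2 : ℂ)‖ ≤ 10 * (1 + (n : ℝ) ^ 2) := by
  have : (2 * n + 1 / 2 : ℂ) = ((2 * n + 1 / 2 : ℝ) : ℂ) := by push_cast; ring
  rw [this, Complex.norm_real, Real.norm_eq_abs, abs_le]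
  constructor <;> nlinarith [sq_nonneg ((n : ℝ) + 1), sq_nonneg ((n : ℝ) - 1)]

lemma thetaDeriv1_eq_tsum {τ : ℂ} (hτ : 0 < τ.im) :
    thetaDeriv1 τ = 4 * ∑' n : ℤ, (2 * n + 1 / 2 : ℂ) *
      cexp (Real.pi * I * τ * (2 * (n : ℂ) + 1 / 2) ^ 2) := by
  have hU := summable_norm_cexp_add_half_sq norm_neg_one_zpow_mul_le_growth hτ
  have h1 (k : ℤ) : (-1 : ℂ) ^ (2 * k) = 1 := by simp [zpow_mul]
  rw [thetaDeriv1, tsum_int_even_odd hU.of_norm, ← (Equiv.subLeft (-1)).tsum_eq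
    fun k : ℤ ↦ (-1 : ℂ) ^ (2 * k + 1) * _ * _]
  rw [show (4 : ℂ) = 2 + 2 by norm_num, add_mul, ← tsum_mul_left]
  congr 1 <;> refine tsum_congr fun k ↦ ?_
  · rw [h1]
    push_cast
    ring_nf
  · rw [zpow_add₀ (by simp), h1, Equiv.subLeft_apply]
    push_cast
    ring_nf

lemma deriv_thetaNull2_mul_sub {τ : ℂ} (hτ : 0 < τ.im) :
    deriv thetaNull2 τ * thetaNull3 τ - thetaNull2 τ * deriv thetaNull3 τ =
      Real.pi * I / 8 * thetaDeriv1 (τ / 2) ^ 2 := by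
  have h2 := summable_norm_cexp_add_half_sq norm_one_le_growth hτ
  have h3 := summable_norm_cexp_sq norm_one_le_growth hτ
  have d2 := summable_norm_deriv_cexp_add_half_sq norm_one_le_growth hτ
  have d3 := summable_norm_deriv_cexp_sq norm_one_le_growth hτ
  have k := summable_norm_cexp_two_mul_add_half_sq norm_two_mul_add_half_le (div_two_im_pos hτ)
  have l := (Equiv.subLeft (-1 : ℤ)).summable_iff.mpr k
  have e := (Equiv.subLeft (-1 : ℤ)).tsum_eq fun n : ℤ ↦ (2 * n + 1 / 2 : ℂ) *
    cexp (Real.pi * I * (τ / 2) * (2 * (n : ℂ) + 1 / 2) ^ 2)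
  have k' := k.mul_left ‖(Real.pi * I : ℂ)‖
  have l' := l.mul_left ‖(Real.pi * I : ℂ)‖
  simp only [← norm_mul, Function.comp_def] at k' l' l
  simp only [one_mul] at h2 d2 h3 d3
  have s1 := summable_mul_of_summable_norm d2 h3
  have s2 := summable_mul_of_summable_norm h2 d3
  rw [(hasDerivAt_thetaNull2 hτ).deriv, (hasDerivAt_thetaNull3 hτ).deriv]
  simp only [one_mul]
  rw [thetaNull2, thetaNull3,
    tsum_mul_tsum_of_summable_norm d2 h3, tsum_mul_tsum_of_summable_norm h2 d3,
    ← s1.tsum_sub s2, tsum_rotate_eq_mul (s1.sub s2) k' k l' l, tsum_mul_left,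
    tsum_mul_left, e, thetaDeriv1_eq_tsum (div_two_im_pos hτ)]
  · ring
  · intro a b
    push_cast
    have : cexp (Real.pi * I * τ * (a + b + 1 / 2) ^ 2) * cexp (Real.pi * I * τ * (a - b) ^ 2) =
        cexp (Real.pi * I * (τ / 2) * (2 * a + 1 / 2) ^ 2) *
          cexp (Real.pi * I * (τ / 2) * (2 * b + 1 / 2) ^ 2) := by
      rw [← Complex.exp_add, ← Complex.exp_add]
      ring_nf
    linear_combination Real.pi * I * ((2 * a + 1 / 2) * (2 * b + 1 / 2)) * this
  · intro a b
    simp only [Equiv.subLeft_apply]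
    push_cast
    have : cexp (Real.pi * I * τ * (a + b + 1 + 1 / 2) ^ 2) *
        cexp (Real.pi * I * τ * (a - b) ^ 2) =
        cexp (Real.pi * I * (τ / 2) * (2 * (-1 - a) + 1 / 2) ^ 2) *
          cexp (Real.pi * I * (τ / 2) * (2 * (-1 - b) + 1 / 2) ^ 2) := by
      rw [← Complex.exp_add, ← Complex.exp_add]
      ring_nf
    linear_combination Real.pi * I * ((2 * a + 3 / 2) * (2 * b + 3 / 2)) * this

lemma thetaNull3_eq_jacobiTheta₂ (τ : ℂ) : thetaNull3 τ = jacobiTheta₂ 0 τ := by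
  refine tsum_congr fun n ↦ ?_
  simp only [jacobiTheta₂_term]
  ring_nf

lemma cexp_int_mul_pi_mul_I (n : ℤ) : cexp (n * (Real.pi * I)) = (-1) ^ n := by
  rw [Complex.exp_int_mul, Complex.exp_pi_mul_I]

lemma thetaNull4_eq_jacobiTheta₂ (τ : ℂ) : thetaNull4 τ = jacobiTheta₂ (1 / 2) τ := by
  refine tsum_congr fun n ↦ ?_
  simp only [jacobiTheta₂_term]
  rw [← cexp_int_mul_pi_mul_I, ← Complex.exp_add]
  ring_nf

lemma thetaNull2_eq_jacobiTheta₂ (τ : ℂ) :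
    thetaNull2 τ = cexp (Real.pi * I * τ / 4) * jacobiTheta₂ (τ / 2) τ := by
  rw [jacobiTheta₂, ← tsum_mul_left]
  refine tsum_congr fun n ↦ ?_
  simp only [jacobiTheta₂_term]
  rw [← Complex.exp_add]
  ring_nf

lemma jacobiTheta₂_half_add_half (τ : ℂ) : jacobiTheta₂ ((τ + 1) / 2) τ = 0 := by
  have h : cexp (Real.pi * I * τ / 4) * jacobiTheta₂ ((τ + 1) / 2) τ = 0 := by
    rw [← tsum_neg_one_zpow_mul_cexp_add_half_sq τ, jacobiTheta₂, ← tsum_mul_left]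
    refine tsum_congr fun n ↦ ?_
    simp only [jacobiTheta₂_term]
    rw [← cexp_int_mul_pi_mul_I, ← Complex.exp_add, ← Complex.exp_add]
    ring_nf
  exact (mul_eq_zero.mp h).resolve_left (Complex.exp_ne_zero _)

lemma thetaDeriv1_eq_jacobiTheta₂' {τ : ℂ} (hτ : 0 < τ.im) :
    Real.pi * I * thetaDeriv1 τ
      = cexp (Real.pi * I * τ / 4) * jacobiTheta₂' ((τ + 1) / 2) τ := by
  have h1 := (hasSum_jacobiTheta₂'_term ((τ + 1) / 2) hτ).mul_left (cexp (Real.pi * I * τ / 4))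
  have h0 := (hasSum_jacobiTheta₂_term ((τ + 1) / 2) hτ).mul_left
    (Real.pi * I * cexp (Real.pi * I * τ / 4))
  rw [jacobiTheta₂_half_add_half, mul_zero] at h0
  rw [thetaDeriv1, ← tsum_mul_left, ← add_zero (cexp _ * _), ← (h1.add h0).tsum_eq]
  refine tsum_congr fun n ↦ ?_
  have : cexp (Real.pi * I * τ / 4) * jacobiTheta₂_term n ((τ + 1) / 2) τ
      = (-1) ^ n * cexp (Real.pi * I * τ * ((n : ℂ) + 1 / 2) ^ 2) := by
    simp only [jacobiTheta₂_term]
    rw [← cexp_int_mul_pi_mul_I, ← Complex.exp_add, ← Complex.exp_add]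
    ring_nf
  simp only [jacobiTheta₂'_term]
  linear_combination -(2 * Real.pi * I * n + Real.pi * I) * this

/-- The weight `1 / 2` automorphy factor of the theta nullwerte under `τ ↦ -1 / τ`. -/
def thetaFactor (τ : ℂ) : ℂ := 1 / (-I * τ) ^ (1 / 2 : ℂ)

lemma thetaFactor_sq {τ : ℂ} (hτ : τ ≠ 0) : thetaFactor τ ^ 2 = I / τ := by
  rw [thetaFactor, div_pow, one_pow, ← Complex.cpow_nat_mul]
  norm_num
  field_simp

lemma thetaNull3_S (τ : ℂ) : thetaNull3 τ = thetaFactor τ * thetaNull3 (-1 / τ) := by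
  rw [thetaNull3_eq_jacobiTheta₂, thetaNull3_eq_jacobiTheta₂, jacobiTheta₂_functional_equation]
  simp [thetaFactor]

lemma thetaNull4_S (τ : ℂ) :
    thetaNull4 τ = thetaFactor τ * thetaNull2 (-1 / τ) := by
  rw [thetaNull4_eq_jacobiTheta₂, thetaNull2_eq_jacobiTheta₂, jacobiTheta₂_functional_equation,
    ← jacobiTheta₂_neg_left (1 / 2 / τ), thetaFactor, ← mul_assoc]
  congr 2
  · congr 1
    ring_nf
  · ring

lemma thetaNull2_S {τ : ℂ} (hτ : τ ≠ 0) :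
    thetaNull2 τ = thetaFactor τ * thetaNull4 (-1 / τ) := by
  rw [thetaNull4_eq_jacobiTheta₂, thetaNull2_eq_jacobiTheta₂, jacobiTheta₂_functional_equation,
    show τ / 2 / τ = 1 / 2 by field_simp, thetaFactor, ← mul_assoc, mul_left_comm,
    ← Complex.exp_add,
    show Real.pi * I * τ / 4 + -Real.pi * I * (τ / 2) ^ 2 / τ = 0 by field_simp; ring,
    Complex.exp_zero, mul_one]

lemma neg_one_div_im_pos {τ : ℂ} (hτ : 0 < τ.im) : 0 < (-1 / τ).im := by
  have h0 : τ ≠ 0 := by rintro rfl; simp at hτ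
  rw [neg_div, neg_im, one_div, inv_im, neg_div, neg_neg]
  exact div_pos hτ (normSq_pos.mpr h0)

lemma thetaDeriv1_S {τ : ℂ} (hτ : 0 < τ.im) :
    thetaDeriv1 τ = thetaFactor τ ^ 3 * thetaDeriv1 (-1 / τ) := by
  have h0 : τ ≠ 0 := by rintro rfl; simp at hτ
  have hz : (τ + 1) / 2 / τ = -((-1 / τ + 1) / 2 - 1) := by field_simp; ring
  have hT : jacobiTheta₂ ((τ + 1) / 2 / τ) (-1 / τ) = 0 := by
    rw [hz, jacobiTheta₂_neg_left, ← jacobiTheta₂_add_left, sub_add_cancel,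
      jacobiTheta₂_half_add_half]
  have hT' : jacobiTheta₂' ((τ + 1) / 2 / τ) (-1 / τ)
      = -jacobiTheta₂' ((-1 / τ + 1) / 2) (-1 / τ) := by
    rw [hz, jacobiTheta₂'_neg_left, ← jacobiTheta₂'_add_left, sub_add_cancel]
  have hexp : cexp (Real.pi * I * τ / 4) * cexp (-Real.pi * I * ((τ + 1) / 2) ^ 2 / τ)
      = -I * cexp (Real.pi * I * (-1 / τ) / 4) := by
    rw [← Complex.exp_neg_pi_div_two_mul_I, ← Complex.exp_add, ← Complex.exp_add]
    congr 1
    field_simp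
    ring
  have hpi : (Real.pi * I : ℂ) ≠ 0 := mul_ne_zero (by exact_mod_cast Real.pi_ne_zero) I_ne_zero
  refine mul_left_cancel₀ hpi ?_
  rw [mul_left_comm, thetaDeriv1_eq_jacobiTheta₂' hτ,
    thetaDeriv1_eq_jacobiTheta₂' (neg_one_div_im_pos hτ), jacobiTheta₂'_functional_equation, hT,
    hT', show thetaFactor τ ^ 3 = thetaFactor τ ^ 2 * thetaFactor τ by ring, thetaFactor_sq h0]
  change _ * (thetaFactor τ * _ / τ * _) = _
  linear_combination (-thetaFactor τ / τ * jacobiTheta₂' ((-1 / τ + 1) / 2) (-1 / τ)) * hexp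

lemma thetaFactor_pow_twentyfour {τ : ℂ} (hτ : τ ≠ 0) : thetaFactor τ ^ 24 = (τ ^ 12)⁻¹ := by
  rw [show thetaFactor τ ^ 24 = (thetaFactor τ ^ 2) ^ 12 by ring, thetaFactor_sq hτ, div_pow,
    show I ^ 12 = (I ^ 4) ^ 3 by ring, I_pow_four]
  simp

lemma thetaNull3_add_one (τ : ℂ) : thetaNull3 (τ + 1) = thetaNull4 τ := by
  refine tsum_congr fun n ↦ ?_
  have : cexp (Real.pi * I * n ^ 2) = (-1) ^ n := by
    rw [← cexp_int_mul_pi_mul_I, Complex.exp_eq_exp_iff_exists_int]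
    obtain ⟨k, hk⟩ := Int.even_mul_pred_self n
    refine ⟨k, ?_⟩
    have hk' : (n : ℂ) * (n - 1) = k + k := by exact_mod_cast hk
    linear_combination Real.pi * I * hk'
  rw [← this, ← Complex.exp_add]
  ring_nf

lemma thetaNull4_add_one (τ : ℂ) : thetaNull4 (τ + 1) = thetaNull3 τ := by
  rw [← thetaNull3_add_one, thetaNull3_eq_jacobiTheta₂, thetaNull3_eq_jacobiTheta₂, add_assoc,
    one_add_one_eq_two, jacobiTheta₂_add_right]

lemma cexp_pi_mul_I_mul_add_half_sq (n : ℤ) :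
    cexp (Real.pi * I * ((n : ℂ) + 1 / 2) ^ 2) = cexp (Real.pi * I / 4) := by
  rw [Complex.exp_eq_exp_iff_exists_int]
  obtain ⟨k, hk⟩ := Int.even_mul_succ_self n
  refine ⟨k, ?_⟩
  have hk' : (n : ℂ) * (n + 1) = k + k := by exact_mod_cast hk
  linear_combination Real.pi * I * hk'

lemma thetaNull2_add_one (τ : ℂ) :
    thetaNull2 (τ + 1) = cexp (Real.pi * I / 4) * thetaNull2 τ := by
  rw [thetaNull2, thetaNull2, ← tsum_mul_left]
  refine tsum_congr fun n ↦ ?_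
  rw [← cexp_pi_mul_I_mul_add_half_sq n, ← Complex.exp_add]
  ring_nf

lemma thetaDeriv1_add_one (τ : ℂ) :
    thetaDeriv1 (τ + 1) = cexp (Real.pi * I / 4) * thetaDeriv1 τ := by
  rw [thetaDeriv1, thetaDeriv1, ← tsum_mul_left]
  refine tsum_congr fun n ↦ ?_
  rw [← cexp_pi_mul_I_mul_add_half_sq n, mul_left_comm, ← Complex.exp_add]
  ring_nf

open UpperHalfPlane ModularForm MatrixGroups in
lemma exists_pow_eight_eq_mul_eta_pow {f : ℂ → ℂ}
    (hd : ∀ τ : ℂ, 0 < τ.im → DifferentiableAt ℂ f τ)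
    (hT : ∀ τ : ℂ, 0 < τ.im → f (τ + 1) ^ 8 = f τ ^ 8)
    (hS : ∀ τ : ℂ, 0 < τ.im → f (-1 / τ) ^ 8 = τ ^ 12 * f τ ^ 8)
    (h0 : Tendsto (fun τ ↦ f τ ^ 8) (comap Complex.im atTop) (𝓝 0)) :
    ∃ c : ℂ, ∀ τ : ℂ, 0 < τ.im → f τ ^ 8 = c * ModularForm.eta τ ^ 24 := by
  let F : ℍ → ℂ := fun z ↦ f z ^ 8
  have hFT : F ∣[(12 : ℤ)] ModularGroup.T = F := by
    ext z
    have hden : denom (ModularGroup.T : SL(2, ℤ)) z = 1 := by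
      rw [ModularGroup.denom_apply, ModularGroup.coe_T]
      simp
    rw [SL_slash_apply, modular_T_smul, hden]
    simpa [F, add_comm] using hT z z.2
  have hFS : F ∣[(12 : ℤ)] ModularGroup.S = F := by
    ext z
    rw [SL_slash_apply, modular_S_smul, ModularGroup.denom_S]
    have h := hS z z.2
    have hz : (z : ℂ) ≠ 0 := z.ne_zero
    have : F (.mk _ z.im_inv_neg_coe_pos) = (z : ℂ) ^ 12 * F z := by
      rw [← h]
      simp [F, neg_div]
    rw [this]
    field_simp
  have hF0 : IsZeroAtImInfty F :=
    h0.comp (tendsto_comap_iff.mpr tendsto_comap)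
  let G : CuspForm 𝒮ℒ 12 :=
    { toFun := F
      slash_action_eq' A hA := by
        obtain ⟨A, rfl⟩ := hA
        exact SlashInvariantForm.slash_action_generators_SL2Z hFS hFT A
      holo' := by
        rw [UpperHalfPlane.mdifferentiable_iff]
        refine .congr (fun z hz ↦ ((hd z hz).pow 8).differentiableWithinAt) fun z hz ↦ ?_
        simp [F, ofComplex_apply_of_im_pos hz]
      zero_at_cusps' hc := by
        rw [Subgroup.IsArithmetic.isCusp_iff_isCusp_SL2Z] at hc
        rw [OnePoint.isZeroAt_iff_forall_SL2Z hc]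
        intro γ _
        rw [SlashInvariantForm.slash_action_generators_SL2Z hFS hFT]
        exact hF0 }
  obtain ⟨c, hc⟩ := CuspForm.exists_smul_discriminant_of_weight_eq_twelve G
  refine ⟨c, fun τ hτ ↦ ?_⟩
  exact (congrArg (fun g : CuspForm 𝒮ℒ 12 ↦ g ⟨τ, hτ⟩) hc).symm

lemma tendsto_cexp_comap_im :
    Tendsto (fun τ : ℂ ↦ cexp (Real.pi * I * τ / 4)) (comap Complex.im atTop) (𝓝 0) := by
  rw [tendsto_zero_iff_norm_tendsto_zero]
  have h : ∀ τ : ℂ, ‖cexp (Real.pi * I * τ / 4)‖ = Real.exp (-(Real.pi / 4 * τ.im)) := by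
    intro τ
    rw [Complex.norm_exp, show (Real.pi * I * τ / 4 : ℂ) = (Real.pi / 4 : ℝ) * (I * τ) by
      push_cast; ring, re_ofReal_mul]
    simp
  simp only [h]
  exact Real.tendsto_exp_neg_atTop_nhds_zero.comp
    (tendsto_comap.const_mul_atTop (by positivity))

lemma eventually_im_pos : ∀ᶠ τ : ℂ in comap Complex.im atTop, 0 < τ.im :=
  tendsto_comap.eventually (eventually_gt_atTop 0)

instance : (comap Complex.im atTop).NeBot :=
  comap_neBot_iff_frequently.mpr (Eventually.frequently (Eventually.of_forall fun y ↦
    ⟨y * I, by simp⟩))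

lemma logDeriv_eq_of_modular {f : ℂ → ℂ} {L : ℂ} (hL : L ≠ 0)
    (hd : ∀ τ : ℂ, 0 < τ.im → DifferentiableAt ℂ f τ)
    (hT : ∀ τ : ℂ, f (τ + 1) = cexp (Real.pi * I / 4) * f τ)
    (hS : ∀ τ : ℂ, 0 < τ.im → f τ = thetaFactor τ ^ 3 * f (-1 / τ))
    (hf : Tendsto (fun τ ↦ cexp (-(Real.pi * I * τ / 4)) * f τ) (comap Complex.im atTop) (𝓝 L)) :
    ∀ (τ : ℂ) (hτ : 0 < τ.im), f τ ≠ 0 ∧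
      deriv f τ / f τ = Real.pi * I / 4 * EisensteinSeries.E2 ⟨τ, hτ⟩ := by
  have hf0 : Tendsto f (comap Complex.im atTop) (𝓝 0) := by
    have := tendsto_cexp_comap_im.mul hf
    simpa only [← mul_assoc, ← Complex.exp_add, add_neg_cancel, Complex.exp_zero, one_mul,
      zero_mul] using this
  obtain ⟨c, hc⟩ := exists_pow_eight_eq_mul_eta_pow hd
    (fun τ _ ↦ by
      rw [hT, mul_pow, ← Complex.exp_nat_mul,
        show ((8 : ℕ) : ℂ) * (Real.pi * I / 4) = 2 * Real.pi * I by push_cast; ring,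
        Complex.exp_two_pi_mul_I, one_mul])
    (fun τ hτ ↦ by
      have h0 : τ ≠ 0 := by rintro rfl; simp at hτ
      rw [hS τ hτ, mul_pow, ← pow_mul, thetaFactor_pow_twentyfour h0,
        mul_inv_cancel_left₀ (pow_ne_zero _ h0)])
    (by simpa using hf0.pow 8)
  have hc0 : c ≠ 0 := by
    rintro rfl
    have hev : ∀ᶠ τ : ℂ in comap Complex.im atTop, cexp (-(Real.pi * I * τ / 4)) * f τ = 0 := by
      filter_upwards [eventually_im_pos] with τ hτ
      have := hc τ hτ
      rw [zero_mul] at this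
      rw [pow_eq_zero_iff (by norm_num) |>.mp this, mul_zero]
    exact hL (tendsto_nhds_unique hf (tendsto_const_nhds.congr' (hev.mono fun _ h ↦ h.symm)))
  intro τ hτ
  have hη : ModularForm.eta τ ≠ 0 := ModularForm.eta_ne_zero hτ
  have hfτ : f τ ≠ 0 := by
    intro h
    have := hc τ hτ
    rw [h, zero_pow (by norm_num)] at this
    exact mul_ne_zero hc0 (pow_ne_zero _ hη) this.symm
  refine ⟨hfτ, ?_⟩
  have hηd := ModularForm.differentiableAt_eta_of_mem_upperHalfPlaneSet hτ
  have hev : (fun z ↦ f z ^ 8) =ᶠ[𝓝 τ] fun z ↦ c * ModularForm.eta z ^ 24 := by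
    filter_upwards [(isOpen_lt continuous_const Complex.continuous_im).mem_nhds hτ] with z hz
    exact hc z hz
  have hder := hev.deriv_eq
  rw [deriv_fun_pow (hd τ hτ), deriv_const_mul _ (hηd.fun_pow 24), deriv_fun_pow hηd] at hder
  have hE := ModularForm.logDeriv_eta_eq_E2 ⟨τ, hτ⟩
  rw [logDeriv_apply] at hE
  change deriv ModularForm.eta τ / ModularForm.eta τ = _ at hE
  have hcτ := hc τ hτ
  simp only [Nat.cast_ofNat, Nat.add_one_sub_one] at hder
  have key : deriv f τ / f τ = 3 * (deriv ModularForm.eta τ / ModularForm.eta τ) := by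
    have h8 : f τ ^ 8 ≠ 0 := pow_ne_zero _ hfτ
    have h1 : deriv f τ / f τ * (8 * f τ ^ 8) = 8 * f τ ^ 7 * deriv f τ := by
      field_simp
    have h2 : 3 * (deriv ModularForm.eta τ / ModularForm.eta τ) * (8 * f τ ^ 8)
        = c * (24 * ModularForm.eta τ ^ 23 * deriv ModularForm.eta τ) := by
      rw [hcτ]
      field_simp
      ring
    exact mul_right_cancel₀ (mul_ne_zero (by norm_num) h8) (h1.trans (hder.trans h2.symm))
  rw [key, hE]
  ring

lemma tsum_ite_sq_eq_zero (c : ℤ → ℂ) :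
    ∑' n : ℤ, (if (n : ℝ) ^ 2 = 0 then c n else 0) = c 0 := by
  rw [tsum_eq_single 0 fun n hn ↦ by simp [hn]]
  simp

lemma tsum_ite_sq_add_self_eq_zero (c : ℤ → ℂ) :
    ∑' n : ℤ, (if (n : ℝ) ^ 2 + n = 0 then c n else 0) = c 0 + c (-1) := by
  rw [tsum_eq_sum (s := {0, -1})]
  · simp
  · intro n hn
    simp only [Finset.mem_insert, Finset.mem_singleton, not_or] at hn
    rw [if_neg]
    have h : (n : ℝ) ^ 2 + n = ((n * (n + 1) : ℤ) : ℝ) := by push_cast; ring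
    rw [h, Int.cast_eq_zero, mul_eq_zero, not_or]
    exact ⟨hn.1, by omega⟩

lemma tendsto_thetaNull3 : Tendsto thetaNull3 (comap im atTop) (𝓝 1) := by
  have := (thetaGrowth_sq norm_one_le_growth).tendsto
  rw [tsum_ite_sq_eq_zero] at this
  simpa only [ofReal_pow, ofReal_intCast, one_mul] using! this

lemma tendsto_thetaNull4 : Tendsto thetaNull4 (comap im atTop) (𝓝 1) := by
  have := (thetaGrowth_sq norm_neg_one_zpow_le_growth).tendsto
  rw [tsum_ite_sq_eq_zero] at this
  simpa only [ofReal_pow, ofReal_intCast, zpow_zero] using! this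

lemma cexp_mul_tsum_add_half_sq (c : ℤ → ℂ) (τ : ℂ) :
    cexp (-(Real.pi * I * τ / 4)) * ∑' n : ℤ, c n * cexp (Real.pi * I * τ * ((n : ℂ) + 1 / 2) ^ 2)
      = ∑' n : ℤ, c n * cexp (Real.pi * I * τ * ((n : ℝ) ^ 2 + n : ℝ)) := by
  rw [← tsum_mul_left]
  refine tsum_congr fun n ↦ ?_
  rw [mul_left_comm, ← Complex.exp_add]
  push_cast
  ring_nf

lemma tendsto_cexp_mul_thetaNull2 :
    Tendsto (fun τ ↦ cexp (-(Real.pi * I * τ / 4)) * thetaNull2 τ) (comap im atTop) (𝓝 2) := by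
  have := (thetaGrowth_sq_add_self norm_one_le_growth).tendsto
  rw [tsum_ite_sq_add_self_eq_zero, one_add_one_eq_two] at this
  refine this.congr fun τ ↦ ?_
  rw [← cexp_mul_tsum_add_half_sq fun _ ↦ 1, thetaNull2]
  simp only [one_mul]

lemma tendsto_cexp_mul_thetaDeriv1 :
    Tendsto (fun τ ↦ cexp (-(Real.pi * I * τ / 4)) * thetaDeriv1 τ) (comap im atTop) (𝓝 2) := by
  have := (thetaGrowth_sq_add_self norm_neg_one_zpow_mul_le_growth).tendsto
  rw [tsum_ite_sq_add_self_eq_zero] at this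
  simp only [← cexp_mul_tsum_add_half_sq] at this
  convert! this using 2
  norm_num

/-- The product of the three theta nullwerte. -/
def thetaProd (τ : ℂ) : ℂ := thetaNull2 τ * thetaNull3 τ * thetaNull4 τ

lemma differentiableAt_thetaProd {τ : ℂ} (hτ : 0 < τ.im) : DifferentiableAt ℂ thetaProd τ :=
  ((hasDerivAt_thetaNull2 hτ).differentiableAt.mul
    (hasDerivAt_thetaNull3 hτ).differentiableAt).mul (hasDerivAt_thetaNull4 hτ).differentiableAt

lemma tendsto_cexp_mul_thetaProd :
    Tendsto (fun τ ↦ cexp (-(Real.pi * I * τ / 4)) * thetaProd τ) (comap im atTop) (𝓝 2) := by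
  have := (tendsto_cexp_mul_thetaNull2.mul tendsto_thetaNull3).mul tendsto_thetaNull4
  simpa only [thetaProd, mul_assoc, mul_one] using this

lemma thetaProd_logDeriv (τ : ℂ) (hτ : 0 < τ.im) : thetaProd τ ≠ 0 ∧
    deriv thetaProd τ / thetaProd τ = Real.pi * I / 4 * EisensteinSeries.E2 ⟨τ, hτ⟩ := by
  refine logDeriv_eq_of_modular two_ne_zero (fun _ ↦ differentiableAt_thetaProd) (fun τ ↦ ?_)
    (fun τ hτ ↦ ?_) tendsto_cexp_mul_thetaProd τ hτ
  · rw [thetaProd, thetaNull2_add_one, thetaNull3_add_one, thetaNull4_add_one, thetaProd]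
    ring
  · have h0 : τ ≠ 0 := by rintro rfl; simp at hτ
    rw [thetaProd, thetaNull2_S h0, thetaNull3_S τ, thetaNull4_S τ, thetaProd]
    ring

lemma thetaDeriv1_logDeriv (τ : ℂ) (hτ : 0 < τ.im) : thetaDeriv1 τ ≠ 0 ∧
    deriv thetaDeriv1 τ / thetaDeriv1 τ = Real.pi * I / 4 * EisensteinSeries.E2 ⟨τ, hτ⟩ :=
  logDeriv_eq_of_modular two_ne_zero (fun _ ↦ differentiableAt_thetaDeriv1) thetaDeriv1_add_one
    (fun _ ↦ thetaDeriv1_S) tendsto_cexp_mul_thetaDeriv1 τ hτ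

/-- Jacobi's derivative formula. -/
lemma thetaDeriv1_eq_thetaProd {τ : ℂ} (hτ : 0 < τ.im) : thetaDeriv1 τ = thetaProd τ := by
  have hconst : ∀ z : ℂ, 0 < z.im → thetaDeriv1 z / thetaProd z = thetaDeriv1 τ / thetaProd τ := by
    intro z hz
    refine (convex_halfSpace_im_gt 0).is_const_of_fderivWithin_eq_zero (𝕜 := ℂ)
      (s := {w : ℂ | 0 < w.im}) (f := fun w ↦ thetaDeriv1 w / thetaProd w) ?_ ?_ hz hτ
    · exact fun w hw ↦ ((differentiableAt_thetaDeriv1 hw).div (differentiableAt_thetaProd hw)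
        (thetaProd_logDeriv w hw).1).differentiableWithinAt
    · intro w hw
      obtain ⟨hP, hP'⟩ := thetaProd_logDeriv w hw
      obtain ⟨hD, hD'⟩ := thetaDeriv1_logDeriv w hw
      have hd := ((differentiableAt_thetaDeriv1 hw).hasDerivAt.fun_div
        (differentiableAt_thetaProd hw).hasDerivAt hP)
      rw [← hP', div_eq_div_iff hD hP] at hD'
      rw [show deriv thetaDeriv1 w * thetaProd w - thetaDeriv1 w * deriv thetaProd w = 0 by
        linear_combination hD', zero_div] at hd
      rw [fderivWithin_eq_fderiv
        ((isOpen_lt continuous_const Complex.continuous_im).uniqueDiffWithinAt hw)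
        hd.differentiableAt]
      ext
      simp [hd.deriv]
  have hlim : Tendsto (fun z ↦ thetaDeriv1 z / thetaProd z) (comap im atTop) (𝓝 1) := by
    have := tendsto_cexp_mul_thetaDeriv1.div tendsto_cexp_mul_thetaProd two_ne_zero
    rw [div_self two_ne_zero] at this
    refine this.congr fun z ↦ ?_
    exact mul_div_mul_left _ _ (Complex.exp_ne_zero _)
  have h1 : thetaDeriv1 τ / thetaProd τ = 1 :=
    tendsto_nhds_unique (tendsto_const_nhds.congr' (eventually_im_pos.mono fun z hz ↦
      (hconst z hz).symm)) hlim
  rwa [div_eq_one_iff_eq (thetaProd_logDeriv τ hτ).1] at h1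

lemma thetaNull_ne_zero {τ : ℂ} (hτ : 0 < τ.im) :
    thetaNull2 τ ≠ 0 ∧ thetaNull3 τ ≠ 0 ∧ thetaNull4 τ ≠ 0 := by
  have := (thetaProd_logDeriv τ hτ).1
  simp only [thetaProd, mul_ne_zero_iff] at this
  tauto

lemma logDeriv_thetaNull3_sub_thetaNull4 {τ : ℂ} (hτ : 0 < τ.im) :
    deriv thetaNull3 τ / thetaNull3 τ - deriv thetaNull4 τ / thetaNull4 τ
      = Real.pi * I / 4 * thetaNull2 τ ^ 4 := by
  obtain ⟨-, h3, h4⟩ := thetaNull_ne_zero hτ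
  have hW := deriv_thetaNull3_mul_sub hτ
  rw [thetaDeriv1_eq_thetaProd (two_mul_im_pos hτ), thetaProd] at hW
  rw [div_sub_div _ _ h3 h4, div_eq_iff (mul_ne_zero h3 h4)]
  have h2sq := thetaNull2_sq hτ
  have h34 := thetaNull3_mul_thetaNull4 hτ
  rw [hW, h34, show thetaNull2 τ ^ 4 = (thetaNull2 τ ^ 2) ^ 2 by ring, h2sq]
  ring

lemma logDeriv_thetaNull2_sub_thetaNull3 {τ : ℂ} (hτ : 0 < τ.im) :
    deriv thetaNull2 τ / thetaNull2 τ - deriv thetaNull3 τ / thetaNull3 τ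
      = Real.pi * I / 4 * thetaNull4 τ ^ 4 := by
  obtain ⟨h2, h3, -⟩ := thetaNull_ne_zero hτ
  have hW := deriv_thetaNull2_mul_sub hτ
  have h2sq := thetaNull2_sq (div_two_im_pos hτ)
  have h34 := thetaNull3_mul_thetaNull4 (div_two_im_pos hτ)
  rw [mul_div_cancel₀ τ (two_ne_zero' ℂ)] at h2sq h34
  rw [thetaDeriv1_eq_thetaProd (div_two_im_pos hτ), thetaProd, mul_assoc, h34, mul_pow, h2sq] at hW
  rw [div_sub_div _ _ h2 h3, div_eq_iff (mul_ne_zero h2 h3), hW]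
  ring

lemma logDeriv_thetaNull3 {τ : ℂ} (hτ : 0 < τ.im) :
    deriv thetaNull3 τ / thetaNull3 τ = Real.pi * I / 12 *
      (EisensteinSeries.E2 ⟨τ, hτ⟩ + thetaNull2 τ ^ 4 - thetaNull4 τ ^ 4) := by
  obtain ⟨h2, h3, h4⟩ := thetaNull_ne_zero hτ
  have e1 := logDeriv_thetaNull3_sub_thetaNull4 hτ
  have e2 := logDeriv_thetaNull2_sub_thetaNull3 hτ
  have e3 := (thetaProd_logDeriv τ hτ).2
  have hd := ((hasDerivAt_thetaNull2 hτ).differentiableAt.hasDerivAt.mul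
    (hasDerivAt_thetaNull3 hτ).differentiableAt.hasDerivAt).mul
    (hasDerivAt_thetaNull4 hτ).differentiableAt.hasDerivAt
  have e4 : deriv thetaProd τ / thetaProd τ = deriv thetaNull2 τ / thetaNull2 τ
      + deriv thetaNull3 τ / thetaNull3 τ + deriv thetaNull4 τ / thetaNull4 τ := by
    rw [show deriv thetaProd τ = _ from hd.deriv, thetaProd]
    simp only [Pi.mul_apply]
    field_simp
  linear_combination (e3 - e4 + e1 - e2) / 3

/-- the lattice point `m + nτ` with coordinates `p = (m, n)`. -/
def latticePoint (τ : ℂ) (p : ℤ × ℤ) : ℂ := (p.1 : ℂ) + (p.2 : ℂ) * τ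

/-- the summand of the Weierstrass `℘` function at the lattice point with coordinates `p`. -/
def wpSummand (τ : ℂ) (p : ℤ × ℤ) (z : ℂ) : ℂ :=
  (z - latticePoint τ p)⁻¹ ^ 2 - (latticePoint τ p)⁻¹ ^ 2

/-- a bound for `wpSummand τ p` on the part of the line `im z = im τ / 2` in the disc of radius
`‖τ‖ + 2`. -/
def wpBound (τ : ℂ) (p : ℤ × ℤ) : ℝ :=
  if 2 * (‖τ‖ + 2) ≤ ‖latticePoint τ p‖ then
    10 * (‖τ‖ + 2) * ‖latticePoint τ p‖ ^ (-3 : ℝ)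
  else 4 / τ.im ^ 2 + ‖(latticePoint τ p)⁻¹ ^ 2‖

section quasiPeriod

variable {τ : ℂ}

lemma summable_norm_latticePoint_rpow (hτ : 0 < τ.im) :
    Summable fun p : ℤ × ℤ ↦ ‖latticePoint τ p‖ ^ (-3 : ℝ) := by
  have h := EisensteinSeries.summable_norm_eisSummand (k := 3) le_rfl ⟨τ, hτ⟩
  rw [← ((finTwoArrowEquiv ℤ).trans (.prodComm ..)).symm.summable_iff] at h
  refine h.congr fun p ↦ ?_
  simp only [Function.comp_apply, EisensteinSeries.eisSummand, latticePoint]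
  rw [Real.rpow_neg (norm_nonneg _), norm_zpow, zpow_neg]
  congr 1
  rw [show (3 : ℝ) = ((3 : ℕ) : ℝ) by norm_num, Real.rpow_natCast]
  simp [add_comm]

lemma summable_wpBound (hτ : 0 < τ.im) : Summable (wpBound τ) := by
  have h := summable_norm_latticePoint_rpow hτ
  refine (h.mul_left (10 * (‖τ‖ + 2))).congr_cofinite ?_
  have hev : ∀ᶠ p in cofinite, ‖latticePoint τ p‖ ^ (-3 : ℝ) < (2 * (‖τ‖ + 2)) ^ (-3 : ℝ) :=
    h.tendsto_cofinite_zero.eventually_lt_const (by positivity)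
  have h0 : ∀ᶠ p : ℤ × ℤ in cofinite, p ≠ 0 := by
    simp
  filter_upwards [hev, h0] with p hp hp0
  have hw : latticePoint τ p ≠ 0 := by
    intro hw
    apply hp0
    have him : (p.2 : ℝ) * τ.im = 0 := by
      have := congrArg im hw
      simpa [latticePoint] using this
    have h2 : p.2 = 0 := by
      have := (mul_eq_zero.mp him).resolve_right hτ.ne'
      exact_mod_cast this
    have h1 : p.1 = 0 := by
      rw [latticePoint, h2] at hw
      simpa using hw
    exact Prod.ext h1 h2
  rw [wpBound, if_pos]
  by_contra! hlt
  exact absurd hp (not_lt.mpr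
    (Real.rpow_le_rpow_of_nonpos (norm_pos_iff.mpr hw) hlt.le (by norm_num)))

lemma half_im_le_norm_sub_latticePoint {z : ℂ} (hτ : 0 < τ.im) (hz : z.im = τ.im / 2)
    (p : ℤ × ℤ) : τ.im / 2 ≤ ‖z - latticePoint τ p‖ := by
  refine le_trans ?_ (abs_im_le_norm _)
  have him : (z - latticePoint τ p).im = τ.im * (1 / 2 - p.2) := by
    simp [latticePoint, hz]; ring
  rw [him, abs_mul, abs_of_pos hτ, div_eq_mul_inv]
  refine mul_le_mul_of_nonneg_left ?_ hτ.le
  rcases le_or_gt p.2 0 with h | h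
  · have : (p.2 : ℝ) ≤ 0 := by exact_mod_cast h
    rw [abs_of_nonneg (by linarith)]; linarith
  · have : (1 : ℝ) ≤ p.2 := by exact_mod_cast h
    rw [abs_of_nonpos (by linarith)]; linarith

lemma sub_latticePoint_ne_zero {z : ℂ} (hτ : 0 < τ.im) (hz : z.im = τ.im / 2) (p : ℤ × ℤ) :
    z - latticePoint τ p ≠ 0 :=
  norm_pos_iff.mp ((half_pos hτ).trans_le (half_im_le_norm_sub_latticePoint hτ hz p))

lemma not_inLattice_of_im_eq {z : ℂ} (hτ : 0 < τ.im) (hz : z.im = τ.im / 2) :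
    ¬ InLattice τ z := by
  rintro ⟨m, n, h⟩
  exact sub_latticePoint_ne_zero hτ hz (m, n) (by simp [latticePoint, h])

lemma norm_wpSummand_le {z : ℂ} (hτ : 0 < τ.im) (hz : z.im = τ.im / 2) (hzn : ‖z‖ < ‖τ‖ + 2)
    (p : ℤ × ℤ) : ‖wpSummand τ p z‖ ≤ wpBound τ p := by
  rw [wpBound, wpSummand]
  split_ifs with h
  · simpa using PeriodPair.weierstrassP_bound (‖τ‖ + 2) (by positivity) z hzn _ h
  · refine (norm_sub_le _ _).trans (add_le_add_left ?_ _)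
    have := half_im_le_norm_sub_latticePoint hτ hz p
    calc ‖(z - latticePoint τ p)⁻¹ ^ 2‖ = (‖z - latticePoint τ p‖ ^ 2)⁻¹ := by simp
      _ ≤ ((τ.im / 2) ^ 2)⁻¹ := by gcongr
      _ = 4 / τ.im ^ 2 := by field_simp; norm_num

lemma hasSum_wpSummand {z : ℂ} (hτ : 0 < τ.im) (hz : z.im = τ.im / 2) (hzn : ‖z‖ < ‖τ‖ + 2) :
    HasSum (fun p ↦ wpSummand τ p z) (wp τ z) := by
  have hs : Summable fun p ↦ wpSummand τ p z :=
    Summable.of_norm_bounded (summable_wpBound hτ) (norm_wpSummand_le hτ hz hzn)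
  have key : wp τ z = ∑' p, wpSummand τ p z := by
    rw [hs.tsum_eq_add_tsum_ite 0, wp]
    congr 1
    · simp [wpSummand, latticePoint]
    · refine (tsum_subtype {w : ℤ × ℤ | w ≠ 0} (fun p ↦ wpSummand τ p z)).trans
        (tsum_congr fun p ↦ ?_)
      by_cases hp : p = 0 <;> simp [hp]
  rw [key]
  exact hs.hasSum

lemma path_im (t : ℝ) : (τ / 2 + t : ℂ).im = τ.im / 2 := by simp

lemma norm_path_lt {t : ℝ} (ht : t ∈ Set.Icc (0 : ℝ) 1) : ‖(τ / 2 + t : ℂ)‖ < ‖τ‖ + 2 := by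
  have h1 : ‖(t : ℂ)‖ ≤ 1 := by
    rw [norm_real, Real.norm_eq_abs, abs_of_nonneg ht.1]; exact ht.2
  have h2 : ‖τ / 2‖ ≤ ‖τ‖ := by
    rw [norm_div]; simp
  linarith [norm_add_le (τ / 2) (t : ℂ)]

lemma continuous_wpSummand_path (hτ : 0 < τ.im) (p : ℤ × ℤ) :
    Continuous fun t : ℝ ↦ wpSummand τ p (τ / 2 + t) := by
  unfold wpSummand
  have (t : ℝ) := sub_latticePoint_ne_zero hτ (path_im (τ := τ) t) p
  fun_prop (disch := assumption)

lemma integral_wpSummand_path (hτ : 0 < τ.im) (p : ℤ × ℤ) :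
    ∫ t in (0 : ℝ)..1, wpSummand τ p (τ / 2 + t) =
      (τ / 2 - latticePoint τ p)⁻¹ - (τ / 2 + 1 - latticePoint τ p)⁻¹
        - (latticePoint τ p)⁻¹ ^ 2 := by
  have hd (t : ℝ) : HasDerivAt
      (fun t : ℝ ↦ -((τ / 2 + t : ℂ) - latticePoint τ p)⁻¹ - t * (latticePoint τ p)⁻¹ ^ 2)
      (wpSummand τ p (τ / 2 + t)) t := by
    have h0 := sub_latticePoint_ne_zero hτ (path_im (τ := τ) t) p
    have h1 : HasDerivAt (fun t : ℝ ↦ (t : ℂ)) 1 t := ofRealCLM.hasDerivAt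
    convert! ((((h1.const_add (τ / 2)).sub_const (latticePoint τ p)).inv h0).neg.sub
      (h1.mul_const ((latticePoint τ p)⁻¹ ^ 2))) using 1
    simp [wpSummand, neg_div]
  rw [intervalIntegral.integral_eq_sub_of_hasDerivAt (fun t _ ↦ hd t)
    ((continuous_wpSummand_path hτ p).intervalIntegrable _ _)]
  push_cast
  ring_nf

lemma hasSum_integral_wpSummand_path (hτ : 0 < τ.im) :
    HasSum (fun p ↦ ∫ t in (0 : ℝ)..1, wpSummand τ p (τ / 2 + t))
      (∫ t in (0 : ℝ)..1, wp τ (τ / 2 + t)) := by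
  refine intervalIntegral.hasSum_integral_of_dominated_convergence (fun p _ ↦ wpBound τ p)
    (fun p ↦ (continuous_wpSummand_path hτ p).aestronglyMeasurable) ?_ ?_ ?_ ?_
  · refine fun p ↦ .of_forall fun t ht ↦ norm_wpSummand_le hτ (path_im t) (norm_path_lt ?_) p
    rw [Set.uIoc_of_le zero_le_one] at ht
    exact ⟨ht.1.le, ht.2⟩
  · exact .of_forall fun _ _ ↦ summable_wpBound hτ
  · simp
  · refine .of_forall fun t ht ↦ hasSum_wpSummand hτ (path_im t) (norm_path_lt ?_)
    rw [Set.uIoc_of_le zero_le_one] at ht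
    exact ⟨ht.1.le, ht.2⟩

lemma continuousOn_wp_path (hτ : 0 < τ.im) :
    ContinuousOn (fun t : ℝ ↦ wp τ (τ / 2 + t)) (Set.Icc 0 1) := by
  refine (continuousOn_tsum (fun p ↦ (continuous_wpSummand_path hτ p).continuousOn)
    (summable_wpBound hτ) fun p t ht ↦
      norm_wpSummand_le hτ (path_im t) (norm_path_lt ht) p).congr fun t ht ↦ ?_
  exact (hasSum_wpSummand hτ (path_im t) (norm_path_lt ht)).tsum_eq.symm

lemma integral_wp_path {zeta : ℂ → ℂ → ℂ} {eta1 : ℂ → ℂ} (hzeta : IsWeierstrassZeta zeta)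
    (heta1 : IsEta1 zeta eta1) (hτ : 0 < τ.im) :
    ∫ t in (0 : ℝ)..1, wp τ (τ / 2 + t) = -eta1 τ := by
  have hd (t : ℝ) : HasDerivAt (fun t : ℝ ↦ -zeta τ (τ / 2 + t)) (wp τ (τ / 2 + t)) t := by
    have h1 : HasDerivAt (fun t : ℝ ↦ (t : ℂ)) 1 t := ofRealCLM.hasDerivAt
    have h2 := (hzeta τ hτ).2.1 _ (not_inLattice_of_im_eq hτ (path_im t))
    simpa using! (h2.comp t (h1.const_add (τ / 2))).neg
  rw [intervalIntegral.integral_eq_sub_of_hasDerivAt (fun t _ ↦ hd t)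
    (ContinuousOn.intervalIntegrable (by simpa using continuousOn_wp_path hτ)),
    heta1 τ hτ (τ / 2) (not_inLattice_of_im_eq hτ (by simp))]
  push_cast
  ring_nf

lemma hasSum_telescope_row {a : ℂ}
    (hs : Summable fun m : ℤ ↦ (a - m)⁻¹ - (a + 1 - m)⁻¹) :
    HasSum (fun m : ℤ ↦ (a - m)⁻¹ - (a + 1 - m)⁻¹) 0 := by
  have h := hs.hasSum
  have h2 : HasSum (fun m : ℤ ↦ (a - m)⁻¹ - (a + 1 - m)⁻¹) 0 (SummationFilter.symmetricIco ℤ) := by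
    rw [SummationFilter.hasSum_symmetricIco_int_iff]
    have hA (b : ℕ) : ∑ m ∈ Finset.Ico (-b : ℤ) b, ((a - m)⁻¹ - (a + 1 - m)⁻¹) =
        1 / (((1 : ℤ) : ℂ) * (a + 1) - b) - 1 / (((1 : ℤ) : ℂ) * (a + 1) + b) := by
      have := Finset.sum_Ico_int_sub b (fun m : ℤ ↦ -(a + 1 - m)⁻¹)
      refine (Finset.sum_congr rfl fun m _ ↦ ?_).trans (this.trans ?_)
      · push_cast; ring_nf
      · push_cast; ring_nf
    simp_rw [hA]
    simpa using (EisensteinSeries.tendsto_zero_inv_linear_sub (a + 1) 1).sub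
      (EisensteinSeries.tendsto_zero_inv_linear (a + 1) 1)
  rw [← h2.tsum_eq, tsum_eq_of_summable_unconditional hs]
  exact hs.hasSum

lemma eta1_eq_G2 {zeta : ℂ → ℂ → ℂ} {eta1 : ℂ → ℂ} (hzeta : IsWeierstrassZeta zeta)
    (heta1 : IsEta1 zeta eta1) (hτ : 0 < τ.im) : eta1 τ = EisensteinSeries.G2 ⟨τ, hτ⟩ := by
  have h := hasSum_integral_wpSummand_path hτ
  rw [integral_wp_path hzeta heta1 hτ] at h
  simp_rw [integral_wpSummand_path hτ] at h
  have hswap := (Equiv.prodComm ℤ ℤ).hasSum_iff.mpr h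
  have hrow (n : ℤ) : HasSum (fun m : ℤ ↦ (τ / 2 - latticePoint τ (m, n))⁻¹
      - (τ / 2 + 1 - latticePoint τ (m, n))⁻¹ - (latticePoint τ (m, n))⁻¹ ^ 2)
      (-EisensteinSeries.e2Summand n ⟨τ, hτ⟩) := by
    have hE : HasSum (fun m : ℤ ↦ (latticePoint τ (m, n))⁻¹ ^ 2)
        (EisensteinSeries.e2Summand n ⟨τ, hτ⟩) := by
      rw [EisensteinSeries.e2Summand]
      convert (EisensteinSeries.e2Summand_summable n ⟨τ, hτ⟩).hasSum using 2 with m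
      simp [EisensteinSeries.eisSummand, latticePoint, add_comm, zpow_ofNat, zpow_neg]
    have hT : HasSum (fun m : ℤ ↦ (τ / 2 - latticePoint τ (m, n))⁻¹
        - (τ / 2 + 1 - latticePoint τ (m, n))⁻¹) 0 := by
      have hs := (hswap.summable.prod_factor n).add hE.summable
      have e1 (m : ℤ) : τ / 2 - latticePoint τ (m, n) = τ / 2 - n * τ - m := by
        simp only [latticePoint]; ring
      have e2 (m : ℤ) : τ / 2 + 1 - latticePoint τ (m, n) = τ / 2 - n * τ + 1 - m := by
        simp only [latticePoint]; ring
      simp_rw [e1, e2]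
      refine hasSum_telescope_row (hs.congr fun m ↦ ?_)
      simp [e1, e2]
    simpa using hT.sub hE
  have hcol := (hswap.prod_fiberwise hrow).neg
  simp only [neg_neg] at hcol
  rw [EisensteinSeries.G2, tsum_eq_of_summable_unconditional hcol.summable, hcol.tsum_eq]

lemma E2_eq_eta1 {zeta : ℂ → ℂ → ℂ} {eta1 : ℂ → ℂ} (hzeta : IsWeierstrassZeta zeta)
    (heta1 : IsEta1 zeta eta1) (hτ : 0 < τ.im) :
    EisensteinSeries.E2 ⟨τ, hτ⟩ = 3 * eta1 τ / (Real.pi : ℂ) ^ 2 := by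
  have hpi : (Real.pi : ℂ) ≠ 0 := ofReal_ne_zero.mpr Real.pi_ne_zero
  rw [EisensteinSeries.E2, Pi.smul_apply, ← eta1_eq_G2 hzeta heta1 hτ, riemannZeta_two,
    smul_eq_mul]
  field_simp
  ring

end quasiPeriod

theorem tau_deriv_log_theta_nullwerte
    (zeta : ℂ → ℂ → ℂ) (eta1 : ℂ → ℂ)
    (hzeta : IsWeierstrassZeta zeta) (heta1 : IsEta1 zeta eta1) :
    ∀ τ : ℂ, 0 < τ.im →
      HasDerivAt thetaNull4
        ((Complex.I / (12 * (Real.pi : ℂ))) *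
          (3 * eta1 τ - (Real.pi : ℂ) ^ 2 * (2 * thetaNull2 τ ^ 4 + thetaNull4 τ ^ 4))
          * thetaNull4 τ) τ ∧
      HasDerivAt thetaNull3
        ((Complex.I / (12 * (Real.pi : ℂ))) *
          (3 * eta1 τ + (Real.pi : ℂ) ^ 2 * (thetaNull2 τ ^ 4 - thetaNull4 τ ^ 4))
          * thetaNull3 τ) τ := by
  intro τ hτ
  obtain ⟨-, h3, h4⟩ := thetaNull_ne_zero hτ
  have hpi : (Real.pi : ℂ) ≠ 0 := ofReal_ne_zero.mpr Real.pi_ne_zero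
  have hlog3 := logDeriv_thetaNull3 hτ
  have hlog := logDeriv_thetaNull3_sub_thetaNull4 hτ
  rw [E2_eq_eta1 hzeta heta1 hτ] at hlog3
  have hlog4 : deriv thetaNull4 τ / thetaNull4 τ = Real.pi * I / 12 *
      (3 * eta1 τ / (Real.pi : ℂ) ^ 2 + thetaNull2 τ ^ 4 - thetaNull4 τ ^ 4)
        - Real.pi * I / 4 * thetaNull2 τ ^ 4 := by
    rw [← hlog3, ← hlog]; ring
  constructor
  · convert! (hasDerivAt_thetaNull4 hτ).differentiableAt.hasDerivAt using 1
    rw [(div_eq_iff h4).mp hlog4]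
    field_simp
    ring
  · convert! (hasDerivAt_thetaNull3 hτ).differentiableAt.hasDerivAt using 1
    rw [(div_eq_iff h3).mp hlog3]
    field_simp
    ring

end
end
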